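/- arXiv:1708.07646 — 2 statements merged into one kernel-verified Lean document; each statement's English description precedes it below -/
import Mathlib

section
/- There exists an anti-mitre maximum partial triple system of order 16, but every anti-mitre MMPTS(16) contains a Pasch configuration; consequently there is no 5-sparse MMPTS(16). -/
def isPTS {n : ℕ} (B : Finset (Finset (Fin n))) : Prop :=
  (∀ T ∈ B, T.card = 3) ∧
  ∀ p : Finset (Fin n), p.card = 2 → ∀ T₁ ∈ B, ∀ T₂ ∈ B, p ⊆ T₁ → p ⊆ T₂ → T₁ = T₂

def isMMPTS {n : ℕ} (B : Finset (Finset (Fin n))) : Prop :=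
  isPTS B ∧ ∀ B' : Finset (Finset (Fin n)), isPTS B' → B'.card ≤ B.card

def isPasch {n : ℕ} (B P : Finset (Finset (Fin n))) : Prop :=
  ∃ a b c d e f : Fin n, ({a, b, c, d, e, f} : Finset (Fin n)).card = 6 ∧
    P = {{a, b, c}, {a, d, e}, {b, d, f}, {c, e, f}} ∧ P ⊆ B

def isMitre {n : ℕ} (B M : Finset (Finset (Fin n))) : Prop :=
  ∃ a b c d e f g : Fin n, ({a, b, c, d, e, f, g} : Finset (Fin n)).card = 7 ∧
    M = {{a, b, c}, {a, d, e}, {a, f, g}, {b, d, f}, {c, e, g}} ∧ M ⊆ B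

namespace MM16

/-- Evaluate a number before passing it on (helps kernel reduction). -/
def force (n : ℕ) (k : ℕ → ℕ) : ℕ :=
  @Nat.rec (fun _ => ℕ) (k 0) (fun m _ => k (Nat.succ m)) n

theorem force_eq (n : ℕ) (k : ℕ → ℕ) : force n k = k n := by
  cases n <;> rfl

/-- Pass on a nonzero number; zero (failure) stays zero. -/
def bindNZ (n : ℕ) (k : ℕ → ℕ) : ℕ :=
  @Nat.rec (fun _ => ℕ) 0 (fun m _ => k (Nat.succ m)) n

theorem bindNZ_ne {n : ℕ} {k : ℕ → ℕ} (h : bindNZ n k ≠ 0) : n ≠ 0 ∧ k n ≠ 0 := by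
  cases n with
  | zero => exact absurd rfl h
  | succ m => exact ⟨Nat.succ_ne_zero m, h⟩

/-- Table lookup: third point of the line through `a` and `b`, or `0`. -/
def th (s a b : ℕ) : ℕ :=
  Nat.mod (Nat.shiftRight s (Nat.add (Nat.mul 160 a) (Nat.mul 5 b))) 32

def put1 (s a b c : ℕ) : ℕ :=
  Nat.lor s (Nat.shiftLeft c (Nat.add (Nat.mul 160 a) (Nat.mul 5 b)))

def put (s a b c : ℕ) : ℕ :=
  put1 (put1 (put1 (put1 (put1 (put1 s a b c) a c b) b a c) b c a) c a b) c b a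

/-- Class of a point: `0` for point 1, `1` for 2,3,4, `2` for 5..16, `3` for 17. -/
def cls (x : ℕ) : ℕ := Nat.mod (Nat.shiftRight 62992853328 (Nat.mul 2 x)) 4

def lv (a b : ℕ) : Bool :=
  Nat.beq (Nat.mod (Nat.shiftRight 12442 (Nat.add (Nat.mul 4 (cls a)) (cls b))) 2) 1

def pts16 : List ℕ := [1, 2, 3, 4, 5, 6, 7, 8, 9, 10, 11, 12, 13, 14, 15, 16]

def pts17 : List ℕ := [1, 2, 3, 4, 5, 6, 7, 8, 9, 10, 11, 12, 13, 14, 15, 16, 17]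

def bit (w : ℕ) : ℕ := Nat.shiftLeft 1 w

def killStep (r u v d acc e f : ℕ) : ℕ :=
  cond (or (Nat.beq e 0) (Nat.beq f 0)) acc
    (Nat.lor (Nat.lor (Nat.lor (Nat.lor acc (bit (th r e f))) (bit (th r e (th r u f))))
      (bit (th r f (th r v e)))) (bit (th r d (th r e f))))

def kills (r u v : ℕ) (l : List ℕ) : ℕ :=
  @List.rec ℕ (fun _ => ℕ) 0 (fun d _ ih => force ih fun acc =>
      force (th r u d) fun e => force (th r v d) fun f => killStep r u v d acc e f) l

def k5 (r u v w : ℕ) (l : List ℕ) : Bool :=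
  @List.rec ℕ (fun _ => Bool) false (fun d _ ih => cond (Nat.ble (th r u d) d) ih
      (or (Nat.beq (th r (th r w d) (th r w (th r u d))) v) ih)) l

def skip (u v w : ℕ) : Bool :=
  or (Nat.beq w u) (or (Nat.beq w v) (or (lv u w) (lv v w)))

def putR (r u v w : ℕ) : ℕ :=
  cond (or (Nat.beq u 17) (or (Nat.beq v 17) (Nat.beq w 17))) r (put r u v w)

def child (rec : ℕ → ℕ → ℕ → ℕ) (s r u v w st : ℕ) : ℕ :=
  force (put s u v w) fun s' => force (putR r u v w) fun r' => rec s' r' st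

def other (s u v w : ℕ) : Bool :=
  and (Nat.ble 1 (th s u w)) (not (Nat.beq (th s u w) v))

def dead (s r u v km w : ℕ) : Bool :=
  or (Nat.beq (Nat.mod (Nat.shiftRight km w) 2) 1) (or (other s u v w) (or (other s v u w)
    (or (skip u v w) (k5 r u v w pts16))))

def loop (rec : ℕ → ℕ → ℕ → ℕ) (s r u v km : ℕ) (l : List ℕ) : ℕ → ℕ :=
  @List.rec ℕ (fun _ => ℕ → ℕ) (fun st => st) (fun w _ ih st =>
    cond (dead s r u v km w) (ih st)
      (bindNZ (child rec s r u v w st) fun st' => ih st')) l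

def pi (p x : ℕ) : ℕ := Nat.mod (Nat.shiftRight p (Nat.mul 5 x)) 32

def piMask (p : ℕ) : List ℕ → ℕ
  | [] => 0
  | x :: xs => Nat.lor (bit (pi p x)) (piMask p xs)

def permOK (p : ℕ) : Bool :=
  and (pts17.all fun x => and (and (Nat.ble 1 (pi p x)) (Nat.ble (pi p x) 17))
    (Nat.beq (cls (pi p x)) (cls x))) (Nat.beq (piMask p pts17) 262142)

def tA (t : ℕ) : ℕ := Nat.div t 1024
def tB (t : ℕ) : ℕ := Nat.mod (Nat.div t 32) 32
def tC (t : ℕ) : ℕ := Nat.mod t 32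

def inR (a : ℕ) : Bool := and (Nat.ble 1 a) (Nat.ble a 17)

def citeOK (s p : ℕ) (N : List ℕ) : Bool :=
  N.all fun t => and (and (inR (tA t)) (and (inR (tB t)) (inR (tC t))))
    (Nat.beq (th s (pi p (tA t)) (pi p (tB t))) (pi p (tC t)))

def getN : List (List ℕ) → ℕ → Option (List ℕ)
  | [], _ => none
  | N :: Ns, i => cond (Nat.beq i 0) (some N) (getN Ns (Nat.pred i))

def citeRes (s p st : ℕ) : Option (List ℕ) → ℕ
  | none => 0
  | some N => cond (and (permOK p) (citeOK s p N)) st 0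

def goodPair (r u v : ℕ) : Bool :=
  and (and (inR u) (inR v)) (and (not (Nat.beq u v)) (and (not (lv u v)) (Nat.beq (th r v u) 0)))

def chk (ngs : List (List ℕ)) : ℕ → ℕ → ℕ → ℕ → ℕ
  | 0, _, _, _ => 0
  | fuel + 1, s, r, st =>
    force (Nat.mod st 512) fun tok => force (Nat.div st 512) fun rest =>
      cond (Nat.beq tok 0)
        (force (Nat.mod (Nat.div rest 512) 79228162514264337593543950336) fun p =>
          force (Nat.div (Nat.div rest 512) 79228162514264337593543950336) fun rest' =>
            citeRes s p rest' (getN ngs (Nat.mod rest 512)))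
        (force (Nat.div tok 18) fun u => force (Nat.mod tok 18) fun v =>
          cond (goodPair r u v)
            (force (kills r u v pts16) fun km =>
              loop (fun s' r' st' => chk ngs fuel s' r' st') s r u v km pts17 rest)
            0)

/-- Build both tables of a nogood and run the refutation. -/
def start (ngs : List (List ℕ)) (st : ℕ) : List ℕ → ℕ → ℕ → ℕ
  | [], s, r => chk ngs 60 s r st
  | t :: ts, s, r =>
    cond (and (inR (tA t)) (and (inR (tB t)) (inR (tC t))))
      (child (fun s' r' _ => start ngs st ts s' r') s r (tA t) (tB t) (tC t) 0) 0


/-! ### Soundness of the checker -/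

theorem nbeq_true {a b : ℕ} : (Nat.beq a b = true) ↔ a = b :=
  ⟨Nat.eq_of_beq_eq_true, fun h => by subst h; exact Nat.beq_refl a⟩

theorem nbeq_false {a b : ℕ} : (Nat.beq a b = false) ↔ a ≠ b := by
  rw [← Bool.not_eq_true, nbeq_true]

structure Lin (P : ℕ → ℕ → ℕ → Prop) : Prop where
  swap : ∀ {a b c}, P a b c → P b a c
  rot : ∀ {a b c}, P a b c → P a c b
  ne : ∀ {a b c}, P a b c → a ≠ b
  lo : ∀ {a b c}, P a b c → 1 ≤ a
  hi : ∀ {a b c}, P a b c → a ≤ 17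
  uniq : ∀ {a b c d}, P a b c → P a b d → c = d

/-- The part of a line relation living on the points up to 16. -/
def Real (L : ℕ → ℕ → ℕ → Prop) (a b c : ℕ) : Prop := L a b c ∧ a ≤ 16 ∧ b ≤ 16 ∧ c ≤ 16

structure Sol (L : ℕ → ℕ → ℕ → Prop) : Prop extends Lin L where
  cov : ∀ {a b}, 1 ≤ a → a ≤ 17 → 1 ≤ b → b ≤ 17 → a ≠ b → lv a b = false → ∃ c, L a b c
  lev : ∀ {a b c}, L a b c → lv a b = false
  pasch : ∀ {a b c d e f}, Real L a b c → Real L a d e → Real L b d f → Real L c e f →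
    d ≠ c → False
  mitre : ∀ {a b c d e f g}, Real L a b c → Real L a d e → Real L a f g → Real L b d f →
    Real L c e g → d ≠ c → False

theorem Lin.real {L : ℕ → ℕ → ℕ → Prop} (h : Lin L) : Lin (Real L) where
  swap := fun ⟨h1, h2, h3, h4⟩ => ⟨h.swap h1, h3, h2, h4⟩
  rot := fun ⟨h1, h2, h3, h4⟩ => ⟨h.rot h1, h2, h4, h3⟩
  ne := fun h1 => h.ne h1.1
  lo := fun h1 => h.lo h1.1
  hi := fun h1 => h.hi h1.1
  uniq := fun h1 h2 => h.uniq h1.1 h2.1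

def Inv (s : ℕ) (P : ℕ → ℕ → ℕ → Prop) : Prop :=
  ∀ x y, x < 32 → y < 32 → th s x y ≠ 0 → P x y (th s x y)

theorem th_eq (s a b : ℕ) : th s a b = (s >>> (160 * a + 5 * b)) % 2 ^ 5 := rfl

theorem th_lt (s a b : ℕ) : th s a b < 32 := by
  rw [th_eq]; exact Nat.mod_lt _ (by norm_num)

theorem testBit_th (s a b i : ℕ) :
    (th s a b).testBit i = (decide (i < 5) && s.testBit (160 * a + 5 * b + i)) := by
  rw [th_eq, Nat.testBit_mod_two_pow, Nat.testBit_shiftRight]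

theorem put1_eq (s a b c : ℕ) : put1 s a b c = s ||| (c <<< (160 * a + 5 * b)) := rfl

theorem testBit_big {c j : ℕ} (hc : c < 32) (hj : 5 ≤ j) : c.testBit j = false :=
  Nat.testBit_lt_two_pow (lt_of_lt_of_le hc
    (by calc (32 : ℕ) = 2 ^ 5 := by norm_num
          _ ≤ 2 ^ j := Nat.pow_le_pow_right (by norm_num) hj))

theorem th_put1_ne {s a b c x y : ℕ} (hb : b < 32) (hc : c < 32)
    (hy : y < 32) (h : ¬(x = a ∧ y = b)) : th (put1 s a b c) x y = th s x y := by
  apply Nat.eq_of_testBit_eq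
  intro i
  rw [testBit_th, testBit_th, put1_eq, Nat.testBit_lor, Nat.testBit_shiftLeft]
  by_cases hi : i < 5
  · by_cases hj : 160 * x + 5 * y + i ≥ 160 * a + 5 * b
    · rw [testBit_big hc (by omega)]; simp
    · simp [hj]
  · simp [hi]

theorem th_put1_eq {s a b c : ℕ} (hc : c < 32) :
    th (put1 s a b c) a b = th s a b ||| c := by
  apply Nat.eq_of_testBit_eq
  intro i
  rw [testBit_th, put1_eq, Nat.testBit_lor, Nat.testBit_lor, testBit_th, Nat.testBit_shiftLeft]
  by_cases hi : i < 5
  · simp [hi]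
  · simp [hi, testBit_big hc (le_of_not_gt hi)]

theorem inv_put1 {P : ℕ → ℕ → ℕ → Prop} (hP : Lin P) {s a b c : ℕ} (h : Inv s P)
    (hl : P a b c) : Inv (put1 s a b c) P := by
  have ha := hP.hi hl
  have hb := hP.hi (hP.swap hl)
  have hc := hP.hi (hP.swap (hP.rot hl))
  intro x y hx hy hne
  by_cases hxy : x = a ∧ y = b
  · obtain ⟨rfl, rfl⟩ := hxy
    rw [th_put1_eq (by omega)]
    by_cases h0 : th s x y = 0
    · rw [h0]; simpa using hl
    · have := hP.uniq (h x y hx hy h0) hl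
      rw [this]; simpa using hl
  · rw [th_put1_ne (by omega) (by omega) hy hxy] at hne ⊢
    exact h x y hx hy hne

theorem inv_put {P : ℕ → ℕ → ℕ → Prop} (hP : Lin P) {s a b c : ℕ} (h : Inv s P)
    (hl : P a b c) : Inv (put s a b c) P := by
  have h1 := hP.rot hl
  have h2 := hP.swap hl
  have h3 := hP.rot h2
  have h4 := hP.swap h1
  have h5 := hP.rot h4
  exact inv_put1 hP (inv_put1 hP (inv_put1 hP (inv_put1 hP (inv_put1 hP (inv_put1 hP h hl)
    h1) h2) h3) h4) h5

theorem inv_putR {L : ℕ → ℕ → ℕ → Prop} (hL : Lin L) {r a b c : ℕ} (h : Inv r (Real L))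
    (hl : L a b c) : Inv (putR r a b c) (Real L) := by
  unfold putR
  cases hb : (or (Nat.beq a 17) (or (Nat.beq b 17) (Nat.beq c 17))) with
  | true => exact h
  | false =>
    simp only [Bool.or_eq_false_iff, nbeq_false] at hb
    have ha := hL.hi hl
    have hb' := hL.hi (hL.swap hl)
    have hc := hL.hi (hL.swap (hL.rot hl))
    exact inv_put hL.real h ⟨hl, by omega, by omega, by omega⟩

theorem testBit_bit (m w : ℕ) : (bit m).testBit w = true ↔ m = w := by
  have : bit m = 2 ^ m := by
    show 1 <<< m = 2 ^ m
    rw [Nat.one_shiftLeft]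
  rw [this, Nat.testBit_two_pow]; simp

section
variable {L : ℕ → ℕ → ℕ → Prop} {s r u v w d : ℕ}

theorem Sol.lookup (_hL : Sol L) (hr : Inv r (Real L)) {a b c : ℕ} (ha : a < 32) (hb : b < 32)
    (h : th r a b = c) (hc : c ≠ 0) : Real L a b c := by
  subst h; exact hr a b ha hb hc

theorem killStep_sound (hL : Sol L) (hr : Inv r (Real L)) (h0 : th r v u = 0)
    (hl : L u v w) (hd : d < 32) (acc : ℕ)
    (hk : (killStep r u v d acc (th r u d) (th r v d)).testBit w = true) :
    acc.testBit w = true := by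
  have hu := hL.hi hl
  have hv := hL.hi (hL.swap hl)
  have hw1 := hL.lo (hL.swap (hL.rot hl))
  have hw := hL.hi (hL.swap (hL.rot hl))
  unfold killStep at hk
  cases hb : (or (Nat.beq (th r u d) 0) (Nat.beq (th r v d) 0)) with
  | true => rw [hb] at hk; exact hk
  | false =>
    rw [hb] at hk
    simp only [Bool.or_eq_false_iff, nbeq_false] at hb
    obtain ⟨he0, hf0⟩ := hb
    generalize he : th r u d = e at *
    generalize hf : th r v d = f at *
    have Rude := hL.lookup hr (by omega) hd he he0
    have Rvdf := hL.lookup hr (by omega) hd hf hf0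
    have he32 : e < 32 := he ▸ th_lt _ _ _
    have hf32 : f < 32 := hf ▸ th_lt _ _ _
    have H := hL.toLin.real
    have lift : ∀ {a b}, Real L a b w → Real L u v w := fun h =>
      ⟨hl, Rude.2.1, Rvdf.2.1, h.2.2.2⟩
    have look : ∀ {a b c}, a < 32 → b < 32 → th r a b = c → c ≠ 0 → Real L a b c :=
      fun h1 h2 h3 h4 => hL.lookup hr h1 h2 h3 h4
    have zero : ∀ {a b c : ℕ}, Real L a b c → b ≠ 0 := fun h => by
      have := H.lo (H.swap h); omega
    change ((((acc ||| bit (th r e f)) ||| bit (th r e (th r u f))) ||| bit (th r f (th r v e)))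
      ||| bit (th r d (th r e f))).testBit w = true at hk
    simp only [Nat.testBit_lor, Bool.or_eq_true, testBit_bit] at hk
    have hw0 : w ≠ 0 := by omega
    rcases hk with (((hk | hk) | hk) | hk) | hk
    · exact hk
    · exfalso
      have R1 := look he32 hf32 hk hw0
      have Ruvw := lift R1
      refine hL.pasch Ruvw Rude Rvdf (H.swap (H.rot R1)) ?_
      rintro rfl
      have h1 := H.uniq Rude (H.rot Ruvw)
      have h2 := H.uniq Rvdf (H.rot (H.swap Ruvw))
      subst h1 h2
      omega
    · exfalso
      have R1 := look he32 (th_lt _ _ _) hk hw0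
      have Ruvw := lift R1
      have R2 := look (by omega) hf32 (rfl : th r u f = _) (zero R1)
      refine hL.mitre Ruvw Rude R2 Rvdf (H.swap (H.rot (R1)) |> fun h => h) ?_
      rintro rfl
      have h2 := H.uniq Rvdf (H.rot (H.swap Ruvw))
      subst h2
      exact H.ne R2 rfl
    · exfalso
      have R1 := look hf32 (th_lt _ _ _) hk hw0
      have Ruvw := lift R1
      have R2 := look (by omega) he32 (rfl : th r v e = _) (zero R1)
      refine hL.mitre (H.swap Ruvw) Rvdf R2 Rude (H.swap (H.rot R1)) ?_
      rintro rfl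
      have h2 := H.uniq Rude (H.rot Ruvw)
      subst h2
      exact H.ne R2 rfl
    · exfalso
      have R1 := look hd (th_lt _ _ _) hk hw0
      have Ruvw := lift R1
      have R2 := look he32 hf32 (rfl : th r e f = _) (zero R1)
      refine hL.mitre (H.swap Rude) (H.swap Rvdf) (H.rot R1) Ruvw R2 ?_
      rintro rfl
      have h2 := H.uniq (H.rot Rude) Ruvw
      subst h2
      exact H.ne (H.rot R1) rfl

theorem kills_sound (hL : Sol L) (hr : Inv r (Real L)) (h0 : th r v u = 0)
    (hl : L u v w) : ∀ l : List ℕ, (∀ d ∈ l, d < 32) → (kills r u v l).testBit w = false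
  | [], _ => by simp [kills]
  | d :: l, hd => by
    have ih := kills_sound hL hr h0 hl l (fun x hx => hd x (List.mem_cons_of_mem _ hx))
    have e : kills r u v (d :: l) =
        killStep r u v d (kills r u v l) (th r u d) (th r v d) := by
      have e1 : kills r u v (d :: l) = force (kills r u v l) fun acc =>
        force (th r u d) fun e => force (th r v d) fun f => killStep r u v d acc e f := rfl
      rw [e1, force_eq, force_eq, force_eq]
    rw [e]
    by_contra hc
    have := killStep_sound hL hr h0 hl (hd d List.mem_cons_self) _ (by simpa using hc)
    rw [ih] at this
    exact absurd this (by decide)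

theorem k5_sound (hL : Sol L) (hr : Inv r (Real L))
    (hl : L u v w) : ∀ l : List ℕ, (∀ d ∈ l, d < 32) → k5 r u v w l = false
  | [], _ => rfl
  | d :: l, hd => by
    have ih := k5_sound hL hr hl l (fun x hx => hd x (List.mem_cons_of_mem _ hx))
    have e : k5 r u v w (d :: l) = cond (Nat.ble (th r u d) d) (k5 r u v w l)
      (or (Nat.beq (th r (th r w d) (th r w (th r u d))) v) (k5 r u v w l)) := rfl
    rw [e, ih]
    have hd32 := hd d List.mem_cons_self
    have hu := hL.hi hl
    have hv1 := hL.lo (hL.swap hl)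
    have hw := hL.hi (hL.swap (hL.rot hl))
    have H := hL.toLin.real
    cases hb : Nat.ble (th r u d) d with
    | true => rfl
    | false =>
      have hb' : ¬ th r u d ≤ d := by
        intro h; rw [Nat.ble_eq_true_of_le h] at hb; exact absurd hb (by decide)
      simp only [cond_false, Bool.or_false, nbeq_false]
      intro hk
      have R1 := hL.lookup hr (th_lt _ _ _) (th_lt _ _ _) hk (by omega)
      have hx := H.lo R1
      have hy := H.lo (H.swap R1)
      have R2 := hL.lookup hr (by omega) hd32 (rfl : th r w d = _) (by omega)
      have R3 := hL.lookup hr (by omega) (th_lt _ _ _) (rfl : th r w (th r u d) = _) (by omega)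
      have R4 := hL.lookup hr (by omega) hd32 (rfl : th r u d = _) (by omega)
      have Ruvw : Real L u v w := ⟨hl, R4.2.1, R1.2.2.2, R2.2.1⟩
      refine hL.mitre (H.swap (H.rot Ruvw)) R2 R3 R4 (H.swap (H.rot R1)) ?_
      intro hdv
      rw [hdv] at R4 R3
      have := H.uniq R4 Ruvw
      rw [this] at R3
      exact H.ne R3 rfl

theorem pts16_lt : ∀ d ∈ pts16, d < 32 := by decide

theorem other_sound (hL : Sol L) (hs : Inv s L) (hl : L u v w) : other s u v w = false := by
  unfold other
  by_contra hc
  simp only [Bool.not_eq_false, Bool.and_eq_true, Bool.not_eq_true', Nat.ble_eq,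
    nbeq_false] at hc
  have hu := hL.hi hl
  have hw := hL.hi (hL.swap (hL.rot hl))
  exact hc.2 (hL.uniq (hs u w (by omega) (by omega) (by omega)) (hL.rot hl))

theorem skip_sound (hL : Sol L) (hl : L u v w) : skip u v w = false := by
  unfold skip
  simp only [Bool.or_eq_false_iff, nbeq_false]
  exact ⟨(hL.ne (hL.rot hl)).symm, (hL.ne (hL.rot (hL.swap hl))).symm, hL.lev (hL.rot hl),
    hL.lev (hL.rot (hL.swap hl))⟩

theorem dead_sound (hL : Sol L) (hs : Inv s L) (hr : Inv r (Real L)) (h0 : th r v u = 0)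
    (hl : L u v w) : dead s r u v (kills r u v pts16) w = false := by
  unfold dead
  rw [other_sound hL hs hl, other_sound hL hs (hL.swap hl), skip_sound hL hl,
    k5_sound hL hr hl _ pts16_lt]
  simp only [Bool.or_false, nbeq_false]
  have := kills_sound hL hr h0 hl _ pts16_lt
  rw [Nat.testBit_eq_decide_div_mod_eq] at this
  have h2 := of_decide_eq_false this
  change ¬ ((kills r u v pts16) >>> w) % 2 = 1
  rw [Nat.shiftRight_eq_div_pow]
  exact h2

theorem child_sound (hL : Sol L) (hs : Inv s L) (hr : Inv r (Real L)) (hl : L u v w)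
    {rec : ℕ → ℕ → ℕ → ℕ} {st : ℕ} (hrec : ∀ s r, Inv s L → Inv r (Real L) → rec s r st = 0) :
    child rec s r u v w st = 0 := by
  unfold child
  rw [force_eq, force_eq]
  exact hrec _ _ (inv_put hL.toLin hs hl) (inv_putR hL.toLin hr hl)

theorem loop_sound (hL : Sol L) (hs : Inv s L) (hr : Inv r (Real L)) (h0 : th r v u = 0)
    {rec : ℕ → ℕ → ℕ → ℕ} (hrec : ∀ s r st, Inv s L → Inv r (Real L) → rec s r st = 0)
    (hl : L u v w) : ∀ (l : List ℕ) (_ : w ∈ l) (st : ℕ),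
      loop rec s r u v (kills r u v pts16) l st = 0
  | [], h, _ => absurd h (by simp)
  | x :: l, h, st => by
    have e : loop rec s r u v (kills r u v pts16) (x :: l) st =
      cond (dead s r u v (kills r u v pts16) x) (loop rec s r u v (kills r u v pts16) l st)
      (bindNZ (child rec s r u v x st) fun st' =>
        loop rec s r u v (kills r u v pts16) l st') := rfl
    rw [e]
    by_cases hx : w = x
    · subst hx
      rw [dead_sound hL hs hr h0 hl, child_sound hL hs hr hl (fun s r => hrec s r st)]
      rfl
    · have hm : w ∈ l := by simpa [hx] using h
      have ih := loop_sound hL hs hr h0 hrec hl l hm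
      cases dead s r u v (kills r u v pts16) x with
      | true => exact ih st
      | false =>
        by_contra hc
        exact (bindNZ_ne hc).2 (ih _)

end

def Refuted (N : List ℕ) : Prop :=
  ∀ L, Sol L → ¬ ∀ t ∈ N, L (tA t) (tB t) (tC t)

theorem piMask_sound (p y : ℕ) : ∀ l : List ℕ, (piMask p l).testBit y = true →
    ∃ x ∈ l, pi p x = y
  | [], h => by simp [piMask] at h
  | x :: l, h => by
    change (bit (pi p x) ||| piMask p l).testBit y = true at h
    rw [Nat.testBit_lor, Bool.or_eq_true, testBit_bit] at h
    rcases h with h | h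
    · exact ⟨x, List.mem_cons_self, h⟩
    · obtain ⟨z, hz, e⟩ := piMask_sound p y l h
      exact ⟨z, List.mem_cons_of_mem _ hz, e⟩

theorem mem_pts17 {x : ℕ} : x ∈ pts17 ↔ 1 ≤ x ∧ x ≤ 17 := by
  constructor
  · revert x; decide
  · rintro ⟨h1, h2⟩
    interval_cases x <;> decide

theorem cls17 : ∀ x ∈ pts17, cls x = 3 → x = 17 := by decide

theorem mask_bits : ∀ x ∈ pts17, Nat.testBit 262142 x = true := by decide

structure Perm17 (f : ℕ → ℕ) : Prop where
  mem : ∀ x ∈ pts17, f x ∈ pts17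
  cls : ∀ x ∈ pts17, cls (f x) = cls x
  surj : ∀ y ∈ pts17, ∃ x ∈ pts17, f x = y
  inj : ∀ x ∈ pts17, ∀ y ∈ pts17, f x = f y → x = y

theorem permOK_sound {p : ℕ} (h : permOK p = true) : Perm17 (pi p) := by
  unfold permOK at h
  simp only [Bool.and_eq_true, List.all_eq_true, Nat.ble_eq, nbeq_true] at h
  obtain ⟨h1, h2⟩ := h
  have surj : ∀ y ∈ pts17, ∃ x ∈ pts17, pi p x = y := fun y hy =>
    piMask_sound p y _ (by rw [h2]; exact mask_bits y hy)
  refine ⟨fun x hx => mem_pts17.2 (h1 x hx).1, fun x hx => (h1 x hx).2, surj, ?_⟩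
  have : Set.InjOn (pi p) (pts17.toFinset : Finset ℕ) := by
    apply Finset.injOn_of_surjOn_of_card_le (t := pts17.toFinset)
    · intro x hx
      simp only [Finset.mem_coe, List.mem_toFinset] at hx ⊢
      exact mem_pts17.2 (h1 x hx).1
    · intro y hy
      simp only [Finset.mem_coe, List.mem_toFinset] at hy
      obtain ⟨x, hx, e⟩ := surj y hy
      exact ⟨x, by simpa using hx, e⟩
    · exact le_rfl
  intro x hx y hy e
  exact this (by simpa using hx) (by simpa using hy) e

theorem sol_perm {L : ℕ → ℕ → ℕ → Prop} (hL : Sol L) {f : ℕ → ℕ} (hf : Perm17 f) :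
    Sol (fun a b c => (a ∈ pts17 ∧ b ∈ pts17 ∧ c ∈ pts17) ∧ L (f a) (f b) (f c)) := by
  have real : ∀ {a b c}, Real (fun a b c => (a ∈ pts17 ∧ b ∈ pts17 ∧ c ∈ pts17) ∧
      L (f a) (f b) (f c)) a b c → Real L (f a) (f b) (f c) := by
    rintro a b c ⟨⟨⟨h1, h2, h3⟩, h4⟩, h5, h6, h7⟩
    have key : ∀ x ∈ pts17, x ≤ 16 → f x ≤ 16 := by
      intro x hx hx16
      have h8 := mem_pts17.1 (hf.mem x hx)
      by_contra hc
      have h9 : f x = 17 := by omega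
      have h10 := hf.cls x hx
      rw [h9] at h10
      have := cls17 x hx (by rw [← h10]; decide)
      omega
    exact ⟨h4, key a h1 h5, key b h2 h6, key c h3 h7⟩
  have mm : ∀ {a b c}, Real (fun a b c => (a ∈ pts17 ∧ b ∈ pts17 ∧ c ∈ pts17) ∧
      L (f a) (f b) (f c)) a b c → a ∈ pts17 ∧ b ∈ pts17 ∧ c ∈ pts17 := fun h => h.1.1
  have lveq : ∀ a ∈ pts17, ∀ b ∈ pts17, lv (f a) (f b) = lv a b := by
    intro a ha b hb
    unfold lv
    rw [hf.cls a ha, hf.cls b hb]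
  constructor
  · constructor
    · exact fun ⟨⟨h1, h2, h3⟩, h4⟩ => ⟨⟨h2, h1, h3⟩, hL.swap h4⟩
    · exact fun ⟨⟨h1, h2, h3⟩, h4⟩ => ⟨⟨h1, h3, h2⟩, hL.rot h4⟩
    · rintro a b c ⟨h1, h2⟩ rfl
      exact hL.ne h2 rfl
    · exact fun ⟨⟨h1, h2, h3⟩, h4⟩ => (mem_pts17.1 h1).1
    · exact fun ⟨⟨h1, h2, h3⟩, h4⟩ => (mem_pts17.1 h1).2
    · rintro a b c d ⟨⟨h1, h2, h3⟩, h4⟩ ⟨⟨h5, h6, h7⟩, h8⟩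
      exact hf.inj _ h3 _ h7 (hL.uniq h4 h8)
  · intro a b ha ha' hb hb' hab hlv
    have ma := mem_pts17.2 ⟨ha, ha'⟩
    have mb := mem_pts17.2 ⟨hb, hb'⟩
    have qa := mem_pts17.1 (hf.mem a ma)
    have qb := mem_pts17.1 (hf.mem b mb)
    obtain ⟨c, hc⟩ := hL.cov qa.1 qa.2 qb.1 qb.2 (fun e => hab (hf.inj _ ma _ mb e))
      (by rw [lveq a ma b mb]; exact hlv)
    have hc' := hL.swap (hL.rot hc)
    obtain ⟨c', mc, e⟩ := hf.surj c (mem_pts17.2 ⟨hL.lo hc', hL.hi hc'⟩)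
    exact ⟨c', ⟨ma, mb, mc⟩, by rw [e]; exact hc⟩
  · rintro a b c ⟨⟨h1, h2, h3⟩, h4⟩
    rw [← lveq a h1 b h2]; exact hL.lev h4
  · intro a b c d e g h1 h2 h3 h4 hdc
    exact hL.pasch (real h1) (real h2) (real h3) (real h4)
      (fun e => hdc (hf.inj _ (mm h2).2.1 _ (mm h1).2.2 e))
  · intro a b c d e g k h1 h2 h3 h4 h5 hdc
    exact hL.mitre (real h1) (real h2) (real h3) (real h4) (real h5)
      (fun e => hdc (hf.inj _ (mm h2).2.1 _ (mm h1).2.2 e))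

theorem inR_iff {a : ℕ} : inR a = true ↔ a ∈ pts17 := by
  rw [mem_pts17]; unfold inR
  simp only [Bool.and_eq_true, Nat.ble_eq]

theorem cite_sound {L : ℕ → ℕ → ℕ → Prop} (hL : Sol L) {s p : ℕ} {N : List ℕ} (hs : Inv s L)
    (hN : Refuted N) (hp : permOK p = true) : citeOK s p N = false := by
  by_contra hc
  unfold citeOK at hc
  simp only [Bool.not_eq_false, Bool.and_eq_true, List.all_eq_true, inR_iff,
    nbeq_true] at hc
  have hf := permOK_sound hp
  refine hN _ (sol_perm hL hf) fun t ht => ?_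
  obtain ⟨⟨h1, h2, h3⟩, h4⟩ := hc t ht
  refine ⟨⟨h1, h2, h3⟩, ?_⟩
  have q1 := mem_pts17.1 (hf.mem _ h1)
  have q2 := mem_pts17.1 (hf.mem _ h2)
  have q3 := mem_pts17.1 (hf.mem _ h3)
  have := hs (pi p (tA t)) (pi p (tB t)) (by omega) (by omega) (by omega)
  rwa [h4] at this

def AllRef (ngs : List (List ℕ)) : Prop := ∀ N ∈ ngs, Refuted N

theorem getN_mem : ∀ (ngs : List (List ℕ)) (i : ℕ) (N : List ℕ), getN ngs i = some N → N ∈ ngs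
  | [], i, N, h => by simp [getN] at h
  | M :: ngs, i, N, h => by
    unfold getN at h
    cases hb : Nat.beq i 0 with
    | true =>
      rw [hb] at h
      simp only [cond_true, Option.some.injEq] at h
      simp [h]
    | false =>
      rw [hb] at h
      exact List.mem_cons_of_mem _ (getN_mem ngs _ N h)

theorem chk_sound {L : ℕ → ℕ → ℕ → Prop} (hL : Sol L) {ngs : List (List ℕ)} (hn : AllRef ngs) :
    ∀ (fuel s r st : ℕ), Inv s L → Inv r (Real L) → chk ngs fuel s r st = 0
  | 0, _, _, _, _, _ => rfl
  | fuel + 1, s, r, st, hs, hr => by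
    have ih := chk_sound hL hn fuel
    unfold chk
    simp only [force_eq]
    generalize Nat.div st 512 = rest
    generalize Nat.mod st 512 = tok
    cases Nat.beq tok 0 with
    | true =>
      simp only [cond_true]
      generalize Nat.mod (Nat.div rest 512) 79228162514264337593543950336 = p
      generalize Nat.div (Nat.div rest 512) 79228162514264337593543950336 = rest'
      cases hg : getN ngs (Nat.mod rest 512) with
      | none => rfl
      | some N =>
        change cond (and (permOK p) (citeOK s p N)) rest' 0 = 0
        cases hp : permOK p with
        | false => rfl
        | true => rw [cite_sound hL hs (hn N (getN_mem _ _ _ hg)) hp]; rfl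
    | false =>
      simp only [cond_false]
      generalize Nat.div tok 18 = u
      generalize Nat.mod tok 18 = v
      cases hg : goodPair r u v with
      | false => rfl
      | true =>
        simp only [cond_true]
        unfold goodPair at hg
        simp only [Bool.and_eq_true, inR_iff, Bool.not_eq_true', nbeq_false,
          nbeq_true] at hg
        obtain ⟨⟨h1, h2⟩, h3, h4, h5⟩ := hg
        obtain ⟨w, hw⟩ := hL.cov (mem_pts17.1 h1).1 (mem_pts17.1 h1).2 (mem_pts17.1 h2).1
          (mem_pts17.1 h2).2 h3 h4
        have hw' := hL.swap (hL.rot hw)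
        exact loop_sound hL hs hr h5 (fun s r st => ih s r st) hw _
          (mem_pts17.2 ⟨hL.lo hw', hL.hi hw'⟩) _

theorem start_sound {L : ℕ → ℕ → ℕ → Prop} (hL : Sol L) {ngs : List (List ℕ)} (hn : AllRef ngs)
    (st : ℕ) : ∀ (N : List ℕ) (s r : ℕ), (∀ t ∈ N, L (tA t) (tB t) (tC t)) → Inv s L →
      Inv r (Real L) → start ngs st N s r = 0
  | [], s, r, _, hs, hr => chk_sound hL hn _ s r st hs hr
  | t :: N, s, r, hN, hs, hr => by
    unfold start
    cases (and (inR (tA t)) (and (inR (tB t)) (inR (tC t)))) with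
    | false => rfl
    | true =>
      exact child_sound (st := 0) (rec := fun s' r' _ => start ngs st N s' r') hL hs hr
        (hN t List.mem_cons_self) (fun s r h1 h2 => start_sound hL hn st N s r (fun t ht => hN t (List.mem_cons_of_mem _ ht)) h1 h2)

theorem inv_zero (P : ℕ → ℕ → ℕ → Prop) : Inv 0 P := by
  intro x y _ _ h
  exact absurd (by rw [th_eq]; simp) h

theorem allRef_nil : AllRef [] := fun _ h => absurd h (by simp)

theorem allRef_cons {ngs : List (List ℕ)} (hn : AllRef ngs) {N : List ℕ} (st : ℕ)
    (h : Nat.ble 1 (start ngs st N 0 0) = true) : AllRef (N :: ngs) := by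
  intro M hM
  rcases List.mem_cons.1 hM with rfl | hM
  · intro L hL hc
    rw [start_sound hL hn st M 0 0 hc (inv_zero _) (inv_zero _)] at h
    exact absurd h (by decide)
  · exact hn M hM


set_option maxRecDepth 100000

/-! ### The certificate: a chain of refuted partial systems, ending with the empty one -/

def ng0 : List (List ℕ) := []

theorem ref0 : AllRef ng0 := allRef_nil

def ng1 : List (List ℕ) :=
  [2214, 2280, 2347, 2380, 2478, 2148, 2544, 3305, 3240, 3403, 3277, 3535, 3472, 4368] :: ng0

theorem ref1 : AllRef ng1 := allRef_cons ref0
  7213949341373709501481253854470543077155635547357289089310425838555749854265751092814321295105663800731226274795792075738529169972301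
  (by decide +kernel)

def ng2 : List (List ℕ) :=
  [2214, 2280, 2347, 2380, 2478, 2148, 2544, 3305, 3240, 3403, 3277, 3535, 3472, 4364, 4271, 4400] :: ng1

theorem ref2 : AllRef ng2 := allRef_cons ref1
  15259467344475799531764140227431357319423216804940037884988074540074725534293835103739033774801692253457650659235658255563607502325752289272211744917022854333788230299516389328977718280719360908852491080571710907982
  (by decide +kernel)

def ng3 : List (List ℕ) :=
  [2214, 2280, 2347, 2380, 2478, 2148, 2544, 3305, 3240, 3403, 3277, 3535, 3472, 4362, 4333, 4300] :: ng2

theorem ref3 : AllRef ng3 := allRef_cons ref2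
  68567628951630271426417707702153522371925233122713919101746120411110538920567680913200462964838549328185834216592482462296903172956407739813084667880013
  (by decide +kernel)

def ng4 : List (List ℕ) :=
  [2214, 2280, 2347, 2380, 2478, 2148, 2544, 3305, 3240, 3403, 3277, 3535, 3472, 4362, 4334, 4299] :: ng3

theorem ref4 : AllRef ng4 := allRef_cons ref3
  35106838396637739534765235833967546706505492271060095878327046194002882349236934031467810852450353688210860761718986021331779638315460778570321008522205777
  (by decide +kernel)

def ng5 : List (List ℕ) :=
  [2214, 2280, 2347, 2380, 2478, 2148, 2544, 3305, 3240, 3403, 3277, 3535, 3472, 4362] :: ng4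

theorem ref5 : AllRef ng5 := allRef_cons ref4
  5562123460841656534010034953505477860926151592977899108298075199123978273944617758921359941778879829215720370124521165910485811258212310389260857972928055947804785856182703720315913098947186965870332805598568207394895
  (by decide +kernel)

def ng6 : List (List ℕ) :=
  [2214, 2280, 2347, 2380, 2478, 2148, 2544, 3305, 3240, 3403, 3277, 3535, 3472] :: ng5

theorem ref6 : AllRef ng6 := allRef_cons ref5
  15506889286684888416736263453991385618757162880765208535689342306335172518375137307498804877805971459890177398853432376604536047224442388148530448040764866421018435899667835307053076086514473489815127276671251694290309438619268128728699225024622521692207448144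
  (by decide +kernel)

def ng7 : List (List ℕ) :=
  [2214, 2280, 2347, 2380, 2478, 2148, 2544, 3305, 3240, 3403] :: ng6

theorem ref7 : AllRef ng7 := allRef_cons ref6
  778589139190619032317787755772418789071569189993895636678494040608849917480877766172518222419937331747834274841053400524600694001342108638446418170471807884207966297027155162934748104100723039523245997487323395546566696863933973377281040862118548429133897574322131067343748202428457444859317365495437047419622977996348
  (by decide +kernel)

def ng8 : List (List ℕ) :=
  [2214, 2280, 2347, 2380, 2478, 2148, 2544, 3305, 3240, 3275, 3405, 3471, 3536, 4362] :: ng7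

theorem ref8 : AllRef ng8 := allRef_cons ref7
  5562731238243938658147802665326611021238792780677947669515905524959209290425826862886216458503117176033203640692046607351334388456233557562425053801702261866308490346224963148901310551944906469638213219097817548630605
  (by decide +kernel)

def ng9 : List (List ℕ) :=
  [2214, 2280, 2347, 2380, 2478, 2148, 2544, 3305, 3240, 3275, 3405, 3471, 3536] :: ng8

theorem ref9 : AllRef ng9 := allRef_cons ref8
  41442444728349175305236017173519876499853204552793473572933463706431460119858705919494855139650393930141444061023508926815424873848274594628024757294025410749782405107475800291956250906106034503953849866256464
  (by decide +kernel)

def ng10 : List (List ℕ) :=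
  [2214, 2280, 2347, 2380, 2478, 2148, 2544, 3305, 3240, 3275] :: ng9

theorem ref10 : AllRef ng10 := allRef_cons ref9
  5800926547876647985961628631329530452218851651441132952188496136115869469361051033690082251373625496704828512119800116114281682576725745804123772901862523056505185965872393975484430654532228843796994543604495681151054113458532631558615222824379583475143790857548140405819642122740276547033776811129505133397056
  (by decide +kernel)

def ng11 : List (List ℕ) :=
  [2214, 2280, 2347, 2380, 2478, 2148, 2544, 3305, 3240] :: ng10

theorem ref11 : AllRef ng11 := allRef_cons ref10
  860778388717015694469364767428158360474515108028145977208711979084138782472907309382397420596285006029210630333560835759183786574525202628013435967832242091648512579033227699630465320093779922332775879256335092631281622878380012150494303617089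
  (by decide +kernel)

def ng12 : List (List ℕ) :=
  [2214, 2280, 2347, 2380, 2478, 2148, 2544, 3305] :: ng11

theorem ref12 : AllRef ng12 := allRef_cons ref11
  17877667694576623024216714525818689934323961601969239173714345968504286715496252967158175967770757804194855400271072165314071405480868136442433903277719334237298087859191545800352634835463280146676834241605675343706435152036432186903394262373541017736539932736050166266106740798
  (by decide +kernel)

def ng13 : List (List ℕ) :=
  [2214, 2280, 2347, 2380, 2478, 2148, 2544] :: ng12

theorem ref13 : AllRef ng13 := allRef_cons ref12
  7711695481818036876393463191231694007834352117040522105397376376060575649679086054984692924748218758934929968154587090693006715784487639638689476599616464371386744002097480516677976327659675301782681243838794179043401761988616254433716310399240478866918221536045451663012235551484300291203060504427058393735928152602082692034018996803169914191933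
  (by decide +kernel)

def ng14 : List (List ℕ) :=
  [2214, 2280, 2347, 2380, 2478, 2159, 2192, 3344, 3305, 3243, 3274, 3213, 3470, 4271, 11663, 9647] :: ng13

theorem ref14 : AllRef ng14 := allRef_cons ref13
  6982681030664332475348777572920014402660515075262509068331405423921281043862560990031289632388908050363259631389046877684582722210218681448896869528227015113551335737607143381148630776490438831200582865652076947860369851690238779509413811618233607359595602029262903539405663423166651067252177291252582968635819009622800854572758574051870841736964165392585396508534679218835802182435543489669706119279633506438750934167522799564452066005370488457315392633805723570861854
  (by decide +kernel)

def ng15 : List (List ℕ) :=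
  [2214, 2280, 2347, 2380, 2478, 2159, 2192, 3344, 3305, 3243, 3274, 3213, 3470, 4271, 11663] :: ng14

theorem ref15 : AllRef ng15 := allRef_cons ref14
  217334246605857261275546393478160048137018713085122989602721917490330755436410243527587013251170675426496702705820022177386923886522653199405299559893392582821570243980968780117486521072200803065
  (by decide +kernel)

def ng16 : List (List ℕ) :=
  [2214, 2280, 2347, 2380, 2478, 2159, 2192, 3344, 3305, 3243, 3274, 3213, 3470, 4271, 11727] :: ng15

theorem ref16 : AllRef ng16 := allRef_cons ref15
  22893037604316320150564710458433242706444340132201119007208295120098379624999815546354686918566709135075933521086351932693152624048948075144348563896071037473091952974290777073738683907347377444465032315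
  (by decide +kernel)

def ng17 : List (List ℕ) :=
  [2214, 2280, 2347, 2380, 2478, 2159, 2192, 3344, 3305, 3243, 3274, 3213, 3470, 4271] :: ng16

theorem ref17 : AllRef ng17 := allRef_cons ref16
  51305659457527432978016357789618252922170783231525916972019952767881001515542218861613933919426851915959212554524202686502337642075211276248057933913666821434664910927134059195365836337457150996721772787061703391120399481244954604402389
  (by decide +kernel)

def ng18 : List (List ℕ) :=
  [2214, 2280, 2347, 2380, 2478, 2159, 2192, 3344, 3305, 3243, 3274, 3213, 3470, 4303, 7503, 9647] :: ng17

theorem ref18 : AllRef ng18 := allRef_cons ref17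
  85988320410723858584082351355776789666619323950887014955274580119851699085037505417318755700733073678556621562797186271706966800522984941205780405213045714189371818852201521547739136362254642942142133880020244167143046829248125369626851558441042467193257037555282530790368306432176384108893411626502495743421046321700887456499252222514597169585286908046968967689013978926100759639359743648071957279014513272655311025065543722022187697925629024343202516652396598788685943505092729523777853609029248114533474752108697395289450486403046158160615
  (by decide +kernel)

def ng19 : List (List ℕ) :=
  [2214, 2280, 2347, 2380, 2478, 2159, 2192, 3344, 3305, 3243, 3274, 3213, 3470, 4303, 7503] :: ng18

theorem ref19 : AllRef ng19 := allRef_cons ref18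
  2059410768797919807168058823915360667527694181369205827782772866191153637775032863946509764889510981832297964072621237649829229021488350149260290392387222133199872554215495108728850594622339580486821343085897341398417553325261667164824977520143051873984290025228021903605484066245325309385091894201772352413841300790758985465
  (by decide +kernel)

def ng20 : List (List ℕ) :=
  [2214, 2280, 2347, 2380, 2478, 2159, 2192, 3344, 3305, 3243, 3274, 3213, 3470, 4303, 9551, 11695] :: ng19

theorem ref20 : AllRef ng20 := allRef_cons ref19
  3385632757817861739228121800446350879627683492286031656823917806555638501248456589984360849664529556098793176332806655220776160962428135
  (by decide +kernel)

def ng21 : List (List ℕ) :=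
  [2214, 2280, 2347, 2380, 2478, 2159, 2192, 3344, 3305, 3243, 3274, 3213, 3470, 4303, 9551, 11760] :: ng20

theorem ref21 : AllRef ng21 := allRef_cons ref20
  888059738961278482975455154724060110211505784585099519260965082334952691621892631317117897724100823861580951145690564694392412868656146583327762572326889914458079152078282468452276265173030860016215720577108717697725437955743
  (by decide +kernel)

def ng22 : List (List ℕ) :=
  [2214, 2280, 2347, 2380, 2478, 2159, 2192, 3344, 3305, 3243, 3274, 3213, 3470, 4303, 9551, 1391] :: ng21

theorem ref22 : AllRef ng22 := allRef_cons ref21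
  2734587002778817547008642324174899518660588834592356190911599353791606277622991075945293033032437804935550750
  (by decide +kernel)

def ng23 : List (List ℕ) :=
  [2214, 2280, 2347, 2380, 2478, 2159, 2192, 3344, 3305, 3243, 3274, 3213, 3470, 4303, 9551, 11727] :: ng22

theorem ref23 : AllRef ng23 := allRef_cons ref22
  2077149258303233848875195762052763337857226934604129266918840122668616154706450534320830639798049707762445739804080320536583705784169142035167418622569294432656639226897411176594443852747509210334248465109955168274357155213359494948880061237530344679
  (by decide +kernel)

def ng24 : List (List ℕ) :=
  [2214, 2280, 2347, 2380, 2478, 2159, 2192, 3344, 3305, 3243, 3274, 3213, 3470, 4303, 9551] :: ng23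

theorem ref24 : AllRef ng24 := allRef_cons ref23
  1934494429190972625505241948435886168317357695689766094147079197666759190583679728727659880934548978945845100379157259337827859260977254802611566411213031216134383714984933243483560432702857951334791354683363405141903530679459792557825065173
  (by decide +kernel)

def ng25 : List (List ℕ) :=
  [2214, 2280, 2347, 2380, 2478, 2159, 2192, 3344, 3305, 3243, 3274, 3213, 3470, 4303, 1359] :: ng24

theorem ref25 : AllRef ng25 := allRef_cons ref24
  19222605274549646445682253242126252060602011153809976400446235697915765285872357105422761060014141344150492574364555695360945055149780099978565358385795702507768793968689587646589258751924341637178209159851146942676342327755811964276272182184584985222504599890409438367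
  (by decide +kernel)

def ng26 : List (List ℕ) :=
  [2214, 2280, 2347, 2380, 2478, 2159, 2192, 3344, 3305, 3243, 3274, 3213, 3470, 4303, 8527, 11760] :: ng25

theorem ref26 : AllRef ng26 := allRef_cons ref25
  532974155907360822262939897728759550597035574079613784005056507233811032111912931525860130126459072154321818281237488167990383826493432686882356106533621868751437601408002612827286884578440406895427922429876579086209087724410163612806309342455668824211597327805327593616810869447348775028820878598034927707822823
  (by decide +kernel)

def ng27 : List (List ℕ) :=
  [2214, 2280, 2347, 2380, 2478, 2159, 2192, 3344, 3305, 3243, 3274, 3213, 3470, 4303, 8527] :: ng26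

theorem ref27 : AllRef ng27 := allRef_cons ref26
  250470583934851887532278958849769384232303738111577190860190299589718315659908559716528439466132145355164032827023372927543338553313663774
  (by decide +kernel)

def ng28 : List (List ℕ) :=
  [2214, 2280, 2347, 2380, 2478, 2159, 2192, 3344, 3305, 3243, 3274, 3213, 3470, 4303, 10737] :: ng27

theorem ref28 : AllRef ng28 := allRef_cons ref27
  21062320677763058272353303075090382042631227764340394050339173304211017059470905961173455078545831142456016643323712183517950965209953073534194471221880225643188514924388282419101087005088331435712686241249086032426792797555943539254521934876561755326261249694378545823
  (by decide +kernel)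

def ng29 : List (List ℕ) :=
  [2214, 2280, 2347, 2380, 2478, 2159, 2192, 3344, 3305, 3243, 3274, 3213, 3470, 4303] :: ng28

theorem ref29 : AllRef ng29 := allRef_cons ref28
  1995565140917881665943414591422360632827019931503380774458867268680350640979623043782207731870047125098157042071943507983937144383906591201443178985903047439909936096449659075
  (by decide +kernel)

def ng30 : List (List ℕ) :=
  [2214, 2280, 2347, 2380, 2478, 2159, 2192, 3344, 3305, 3243, 3274, 3213, 3470, 4399, 8527, 6575] :: ng29

theorem ref30 : AllRef ng30 := allRef_cons ref29
  49294233530626275934323998203934154511672263515543218875621491124217717711379357204398778296621367184480385667203501940356044664338479907832528874051183590940038016404553774135124667943185524297772542052416617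
  (by decide +kernel)

def ng31 : List (List ℕ) :=
  [2214, 2280, 2347, 2380, 2478, 2159, 2192, 3344, 3305, 3243, 3274, 3213, 3470, 4399, 8527] :: ng30

theorem ref31 : AllRef ng31 := allRef_cons ref30
  30805873693253993381439624036739936308149341218264927700558457303935395689809261117754318990348624356546690288517545507168177033113974061010362548421117792056146536088740451031097624441864821949222817385068412445184533016937297657
  (by decide +kernel)

def ng32 : List (List ℕ) :=
  [2214, 2280, 2347, 2380, 2478, 2159, 2192, 3344, 3305, 3243, 3274, 3213, 3470, 4399, 10736, 6383] :: ng31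

theorem ref32 : AllRef ng32 := allRef_cons ref31
  96910369944998631779356468427638134295474413307092312041380801719346967922052653583694631269340977505918925381455553320162774077446406450586007246452588906034226258569702562141160615680149059678978017456745
  (by decide +kernel)

def ng33 : List (List ℕ) :=
  [2214, 2280, 2347, 2380, 2478, 2159, 2192, 3344, 3305, 3243, 3274, 3213, 3470, 4399, 10736, 1263] :: ng32

theorem ref33 : AllRef ng33 := allRef_cons ref32
  118906309510847196283565739119446781902771615782694053592313489861345669656704096948125902088381654795436751557345408037036608821829642414701270144635
  (by decide +kernel)

def ng34 : List (List ℕ) :=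
  [2214, 2280, 2347, 2380, 2478, 2159, 2192, 3344, 3305, 3243, 3274, 3213, 3470, 4399, 10736, 7631] :: ng33

theorem ref34 : AllRef ng34 := allRef_cons ref33
  3489196125334642995574234511674673927610111215898925031962575705998115738596400168527962097136914545640909351657518091666249754490820950070035137583039556570217820409867291067207153112540511064052903576595876903549809694434676963605165159174038044174096326653613726910782327957075766789644504658277103353
  (by decide +kernel)

def ng35 : List (List ℕ) :=
  [2214, 2280, 2347, 2380, 2478, 2159, 2192, 3344, 3305, 3243, 3274, 3213, 3470, 4399, 10736, 7665] :: ng34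

theorem ref35 : AllRef ng35 := allRef_cons ref34
  118907467981160583839916604398862776555418801537257030700237901660362374190380783639713750040104196089946101477825665911558022379495751676874268724859
  (by decide +kernel)

def ng36 : List (List ℕ) :=
  [2214, 2280, 2347, 2380, 2478, 2159, 2192, 3344, 3305, 3243, 3274, 3213, 3470, 4399, 10736] :: ng35

theorem ref36 : AllRef ng36 := allRef_cons ref35
  1097073538211831446633595220061214853262069072761239109086206338068056766294361258087914077296161800516661618174721208811025042444201256765789465436847229375733927329263894520333014139021
  (by decide +kernel)

def ng37 : List (List ℕ) :=
  [2214, 2280, 2347, 2380, 2478, 2159, 2192, 3344, 3305, 3243, 3274, 3213, 3470, 4399, 7503, 12784] :: ng36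

theorem ref37 : AllRef ng37 := allRef_cons ref36
  438371111247289193620493340478385599547749692709794746656390424801742961916388764589952137889703714443930069730425853233230297111221518133204077232328123428812140367799087139651109975274384571428819636771267935676644747542066937
  (by decide +kernel)

def ng38 : List (List ℕ) :=
  [2214, 2280, 2347, 2380, 2478, 2159, 2192, 3344, 3305, 3243, 3274, 3213, 3470, 4399, 7503, 1423] :: ng37

theorem ref38 : AllRef ng38 := allRef_cons ref37
  19731091717971779669264578356309383906378412906326907720407065731588700862687890796473071617725459954855553167893646691259564487535030137723989790241835886438753677344714327299791404191
  (by decide +kernel)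

def ng39 : List (List ℕ) :=
  [2214, 2280, 2347, 2380, 2478, 2159, 2192, 3344, 3305, 3243, 3274, 3213, 3470, 4399, 7503, 11663] :: ng38

theorem ref39 : AllRef ng39 := allRef_cons ref38
  4742325496984482527798462581088263350244805047624168770713025123357300168975551299469438371169067280911077904910658158589346743400732302784763273780951253425112904970732998784758543923353701976973423689988562941075623426373790782533335191846504921597241358627369735498364475845670014181147996561982275876116256481707910734866833502826104163510958821707392781544212813669678777083615376600277995917249909801648390311671658782355042450780496082601434739851590627316404837712696332654620527019411269879108631975267505259824944799
  (by decide +kernel)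

def ng40 : List (List ℕ) :=
  [2214, 2280, 2347, 2380, 2478, 2159, 2192, 3344, 3305, 3243, 3274, 3213, 3470, 4399, 7503, 12785] :: ng39

theorem ref40 : AllRef ng40 := allRef_cons ref39
  92851657104420344987885993535467368096459905100906253594617474866638494545513885831754319206751069070984700767476469876342005854016510613892489794067584905967695978400806142514965207151737877819556790381215
  (by decide +kernel)

def ng41 : List (List ℕ) :=
  [2214, 2280, 2347, 2380, 2478, 2159, 2192, 3344, 3305, 3243, 3274, 3213, 3470, 4399, 7503] :: ng40

theorem ref41 : AllRef ng41 := allRef_cons ref40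
  96082966521727057879028397799357316661867016778122860110433776540647002836780531097821405311381656789114549465097512621768444947512091476199
  (by decide +kernel)

def ng42 : List (List ℕ) :=
  [2214, 2280, 2347, 2380, 2478, 2159, 2192, 3344, 3305, 3243, 3274, 3213, 3470, 4399, 1359, 6575] :: ng41

theorem ref42 : AllRef ng42 := allRef_cons ref41
  246009408416459091617423167146954175104786927589576106437685926918077191136659181769449527109252750096811303580468071922026437405933555597434338001431562432766677101867203672609289254840651528217495407174829119456973483758367490831455050653429409482824866008948682367396053037594980139709597471929186950604792638111
  (by decide +kernel)

def ng43 : List (List ℕ) :=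
  [2214, 2280, 2347, 2380, 2478, 2159, 2192, 3344, 3305, 3243, 3274, 3213, 3470, 4399, 1359, 5551] :: ng42

theorem ref43 : AllRef ng43 := allRef_cons ref42
  184063204923357746494490088052342337295663051302680585356702407984600322454930275478292409699870453229988840570255804692150620170584540897328902154471283130721079843908197620510
  (by decide +kernel)

def ng44 : List (List ℕ) :=
  [2214, 2280, 2347, 2380, 2478, 2159, 2192, 3344, 3305, 3243, 3274, 3213, 3470, 4399, 1359] :: ng43

theorem ref44 : AllRef ng44 := allRef_cons ref43
  10175381336062395632862938669999471791360850775942893220585252413864396250672621631978673631527847501723165142976014508490607625082421515562346374978377299114002468569337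
  (by decide +kernel)

def ng45 : List (List ℕ) :=
  [2214, 2280, 2347, 2380, 2478, 2159, 2192, 3344, 3305, 3243, 3274, 3213, 3470, 4399, 10737, 11663] :: ng44

theorem ref45 : AllRef ng45 := allRef_cons ref44
  3183199576498789856043514481697987045146480838096557362523500461337799274088623850359613208776756779031431144321329141826058645112683318720899354273436003558053697301491197338500423566152469642276587584954130198302747830158279501881856720630203449811282636872625946873379639337107867942022207025539585695
  (by decide +kernel)

def ng46 : List (List ℕ) :=
  [2214, 2280, 2347, 2380, 2478, 2159, 2192, 3344, 3305, 3243, 3274, 3213, 3470, 4399, 10737, 11727] :: ng45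

theorem ref46 : AllRef ng46 := allRef_cons ref45
  51066181965061307293988117840367307063313167991782851842658093223321468666443756774865422265840624850338425796055565523603807591179507529167837766253023015451657306999816680562023035954024606537604933351764621
  (by decide +kernel)

def ng47 : List (List ℕ) :=
  [2214, 2280, 2347, 2380, 2478, 2159, 2192, 3344, 3305, 3243, 3274, 3213, 3470, 4399, 10737] :: ng46

theorem ref47 : AllRef ng47 := allRef_cons ref46
  56717372584611259354216332196255070608316939669276188580478994614205335134165420110800015751318463413638752880105471087613488341940406313155683128000621377361621
  (by decide +kernel)

def ng48 : List (List ℕ) :=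
  [2214, 2280, 2347, 2380, 2478, 2159, 2192, 3344, 3305, 3243, 3274, 3213, 3470, 4399] :: ng47

theorem ref48 : AllRef ng48 := allRef_cons ref47
  1995565140917881665943414591422360632827019931503380774458867268696790439059039876377434096047572485985960002101550703478853781897833813238076366885696893983364113533714038979
  (by decide +kernel)

def ng49 : List (List ℕ) :=
  [2214, 2280, 2347, 2380, 2478, 2159, 2192, 3344, 3305, 3243, 3274, 3213, 3470] :: ng48

theorem ref49 : AllRef ng49 := allRef_cons ref48
  1995474391530838695251228553738573092409486681129121392929932897864741061564287723106212083972330731972805561663008322861921132889337087395752241443700979491584575958285025367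
  (by decide +kernel)

def ng50 : List (List ℕ) :=
  [2214, 2280, 2347, 2380, 2478, 2159, 2192, 3344, 3305, 3243] :: ng49

theorem ref50 : AllRef ng50 := allRef_cons ref49
  778659379757532993185621374429442096772642539116338229727637217541209904757192376600941692028930808884635672536765559365252516281531924330338019569847228201372335333787677930737091706006051497765939274039782806402410329345037561763980254475496529359101039944353810457901031763017830874634380041629503555278568509964348
  (by decide +kernel)

def ng51 : List (List ℕ) :=
  [2214, 2280, 2347, 2380, 2478, 2159, 2192, 3344, 3305, 3211, 3274, 3245, 3470, 4303, 7503, 12784] :: ng50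

theorem ref51 : AllRef ng51 := allRef_cons ref50
  45195181856839257276701468009446721921375124877842099148796041550676004734409295597656412428429643361451609431679598887188972703026141004508499432197132210331804955127491437305045400961656572071834018509445201498934864278291698971360954662852085623637611172208322807115452614889788842988757015550216282463055328397588554537315925786371292863677936845658359891079988770325910261955426410660099365202675840650643432357827826463079627193968560832267293285763819460421293768466109026417896791817111728998331625004424860080688757134316988543963671946673456169482392638710686743465672593009921555493554250682472238505405709228366418645
  (by decide +kernel)

def ng52 : List (List ℕ) :=
  [2214, 2280, 2347, 2380, 2478, 2159, 2192, 3344, 3305, 3211, 3274, 3245, 3470, 4303, 7503, 1423] :: ng51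

theorem ref52 : AllRef ng52 := allRef_cons ref51
  613490302333886247131035782345202754605720057206915662509503322285747210068395622099828391803438531816726667751242874279280150253572741013927407797239375551973943229674143
  (by decide +kernel)

def ng53 : List (List ℕ) :=
  [2214, 2280, 2347, 2380, 2478, 2159, 2192, 3344, 3305, 3211, 3274, 3245, 3470, 4303, 7503, 11663] :: ng52

theorem ref53 : AllRef ng53 := allRef_cons ref52
  1376510320165752992016576793911131878096637326399908530425776448967983886241220892741492512574275132210722760598522648677203469550698018564474436052140807079795289556224107254924122243258318654542526215945087556645061222332793271274223944548763944730030413126707646510164056700933314529530099782086498694791732843057476265472122679726749344747489781593163165216273558837667443170827245727638272287822555536454913637307321378594784738687778923028763134222729048484450604833777661195162396511055211715915937393204590287359566620997437800725828448133767592943310031462634400677156550193079917581370002739665541413512637072800811591064122501472847353526034687805458057644708008978125366415786763304614013307241020288718615590301633199976681941818467369147325026795076662459266139133240501732493681874872309458910364971138002318029731271750416536519156080857619796280743621548655104181209672156833612006629222494473473081281733478455098510139346162341862970271089357715059047528396066086941568639640196739587519436319451190193717861687275188729709387168041863757342303596822393060855575967718944903904683879904253688176739204574916554791005026712416945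
  (by decide +kernel)

def ng54 : List (List ℕ) :=
  [2214, 2280, 2347, 2380, 2478, 2159, 2192, 3344, 3305, 3211, 3274, 3245, 3470, 4303, 7503, 12785] :: ng53

theorem ref54 : AllRef ng54 := allRef_cons ref53
  1336377361536297231840519832537778107033401856494957272130212242609189644137988116481105494156508365461131986391462914781050217172216218120214457631626309310352186462879
  (by decide +kernel)

def ng55 : List (List ℕ) :=
  [2214, 2280, 2347, 2380, 2478, 2159, 2192, 3344, 3305, 3211, 3274, 3245, 3470, 4303, 7503] :: ng54

theorem ref55 : AllRef ng55 := allRef_cons ref54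
  96082966521727057879028397799357316661867016778122860110433776540647002836780531097821405311381656789114549465097512621768444947512091476199
  (by decide +kernel)

def ng56 : List (List ℕ) :=
  [2214, 2280, 2347, 2380, 2478, 2159, 2192, 3344, 3305, 3211, 3274, 3245, 3470, 4303, 9551, 5391] :: ng55

theorem ref56 : AllRef ng56 := allRef_cons ref55
  7202330054133790477138789666101272979633906733789616890093443028417131432360150588139642193041862456734603204234487116655131479841966581289911961044544430430958493682270739497977705912217497968280511487677383280917498956213216626486317210734649036496822440632535291359719844758015365660361470344819413
  (by decide +kernel)

def ng57 : List (List ℕ) :=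
  [2214, 2280, 2347, 2380, 2478, 2159, 2192, 3344, 3305, 3211, 3274, 3245, 3470, 4303, 9551, 1199] :: ng56

theorem ref57 : AllRef ng57 := allRef_cons ref56
  169673811142621540039239972359215043242382366875193022022667175786351528525892226773715637884002366182411286159268092291704621069799183584838849751708293358368267258013426265262528574201607119315830234486743420305730244567585161867516923413369922984702576761503
  (by decide +kernel)

def ng58 : List (List ℕ) :=
  [2214, 2280, 2347, 2380, 2478, 2159, 2192, 3344, 3305, 3211, 3274, 3245, 3470, 4303, 9551, 5617] :: ng57

theorem ref58 : AllRef ng58 := allRef_cons ref57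
  731575788054249342202168691509865778876422452137154896569845898685876517768994103959719570360651953175745144277402627127581632779056293960996254651082207822052907266611671634639467393519127219941919455542648192718142306827515418275033797294843875548319391
  (by decide +kernel)

def ng59 : List (List ℕ) :=
  [2214, 2280, 2347, 2380, 2478, 2159, 2192, 3344, 3305, 3211, 3274, 3245, 3470, 4303, 9551] :: ng58

theorem ref59 : AllRef ng59 := allRef_cons ref58
  96082966521727057879028397799357316661867016778122860110433776540533924607784648689980550578796250660950259009527293016256059966430376099945
  (by decide +kernel)

def ng60 : List (List ℕ) :=
  [2214, 2280, 2347, 2380, 2478, 2159, 2192, 3344, 3305, 3211, 3274, 3245, 3470, 4303, 8527, 5423] :: ng59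

theorem ref60 : AllRef ng60 := allRef_cons ref59
  208253997414215048979219139659057570620999573680821147592248967361188351160298333154719430703313425824010115828031578911237918824394149744282594242250147005289756916429550169174848856607751823199241892673617064467610845172061914677103395031740996646800223530833208104639945034805934540341047608333290047833664677726879472527620640249955863164252307114346564588716504443583832834751402455137581566409461163354502265220341455608378312341265827059736872479278040322725294914997945853919557369369416309882147357707998001449141055599666585593474943740480017257736182342645062960203472829230723000835588450783784585198508653075239688609379740333282511442398947709304724601056117499535570845477970760181101499034091241381698272370262478802645
  (by decide +kernel)

def ng61 : List (List ℕ) :=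
  [2214, 2280, 2347, 2380, 2478, 2159, 2192, 3344, 3305, 3211, 3274, 3245, 3470, 4303, 8527, 1199] :: ng60

theorem ref61 : AllRef ng61 := allRef_cons ref60
  17791098748453451811480611769489046315320402042566664196922172441804393762086379467654815031985893042666888281213343297783901679280425626394050699526349904810893967172437958725780718408306825191392148350770810310991604274711361608725384947800488827949893837796917503757858147468270477689535283912891628502807670266912719575729
  (by decide +kernel)

def ng62 : List (List ℕ) :=
  [2214, 2280, 2347, 2380, 2478, 2159, 2192, 3344, 3305, 3211, 3274, 3245, 3470, 4303, 8527, 5617] :: ng61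

theorem ref62 : AllRef ng62 := allRef_cons ref61
  136715808540709437687946681896146833701198205654746439230076264486787825854414421319644223990020405909107628736830852889479089130743046338439327164052914751449181105222288678871904442420459807139520675067604926934288134804053301110929824454845740396670990781190534266271204811618684482377757900628942787118865057173169
  (by decide +kernel)

def ng63 : List (List ℕ) :=
  [2214, 2280, 2347, 2380, 2478, 2159, 2192, 3344, 3305, 3211, 3274, 3245, 3470, 4303, 8527] :: ng62

theorem ref63 : AllRef ng63 := allRef_cons ref62
  96082966521727057879028397799357316661867016778122860110433776540533924607784648689980550578796250682728330492467354677912034842063541633129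
  (by decide +kernel)

def ng64 : List (List ℕ) :=
  [2214, 2280, 2347, 2380, 2478, 2159, 2192, 3344, 3305, 3211, 3274, 3245, 3470, 4303, 1359] :: ng63

theorem ref64 : AllRef ng64 := allRef_cons ref63
  108348995736678820285682051400628387678180906805091229090556955995981462110837167659569857257900970962431721258890368647273
  (by decide +kernel)

def ng65 : List (List ℕ) :=
  [2214, 2280, 2347, 2380, 2478, 2159, 2192, 3344, 3305, 3211, 3274, 3245, 3470, 4303, 10737] :: ng64

theorem ref65 : AllRef ng65 := allRef_cons ref64
  96075698091717526172714685858687911800169225049677291050172596523855828477426301095258712246524940641342643994043409805139607489195364319337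
  (by decide +kernel)

def ng66 : List (List ℕ) :=
  [2214, 2280, 2347, 2380, 2478, 2159, 2192, 3344, 3305, 3211, 3274, 3245, 3470, 4303] :: ng65

theorem ref66 : AllRef ng66 := allRef_cons ref65
  1995565140917881665943414591422360632827019931503380774458867268685047726145170710237986693063625799265986619315576744818682766374517799709149236007885474170455989293532053699
  (by decide +kernel)

def ng67 : List (List ℕ) :=
  [2214, 2280, 2347, 2380, 2478, 2159, 2192, 3344, 3305, 3211, 3274, 3245, 3470] :: ng66

theorem ref67 : AllRef ng67 := allRef_cons ref66
  41446261395589847768698647749711013987274494975906464851872681719862501958236372540196721331610687779834543101605166281797891486738619231007313599273832310451930231080180692016790019825032306026942108748742743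
  (by decide +kernel)

def ng68 : List (List ℕ) :=
  [2214, 2280, 2347, 2380, 2478, 2159, 2192, 3344, 3305, 3211] :: ng67

theorem ref68 : AllRef ng68 := allRef_cons ref67
  5801376420514807036664106958993860307630044767770063422584868195455576859953627437030105693405112037753995816886238134149983724533598411556608257890124761137659802748688279097329641927309769023288756751466809564091568267945052079230498151011568053676699116986722614833633496611348860918911359341523040412923452
  (by decide +kernel)

def ng69 : List (List ℕ) :=
  [2214, 2280, 2347, 2380, 2478, 2159, 2192, 3344, 3305] :: ng68

theorem ref69 : AllRef ng69 := allRef_cons ref68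
  860805249616164817890434656832677565995340530958360099167353399901998565255866318140662800220666311652640657761790621689442788312613214463543063390622192442330327113034936949766890151923411390284542914907595957921815597085881587222126675361857
  (by decide +kernel)

def ng70 : List (List ℕ) :=
  [2214, 2280, 2347, 2380, 2478, 2159, 2192, 3344] :: ng69

theorem ref70 : AllRef ng70 := allRef_cons ref69
  17878225574876153721780485241892873312550687883155566528057418615351304610226146325493603239104722246234522142015202451141180068301870933044492161910582572173481732207672323663274648571898673010632013315053392360611229669393431115004083063291809354783710553877934773802188668989
  (by decide +kernel)

def ng71 : List (List ℕ) :=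
  [2214, 2280, 2347, 2380, 2478, 2159, 2192, 3337] :: ng70

theorem ref71 : AllRef ng71 := allRef_cons ref70
  17878225574835794464463416077858503692349452146160018886002756533395964025180672104338198463957647342262222971251833654623819710137730820093820257966579062277110982712616074601807644113682672298742226536613197745823863740049642031361062407505621273832765467087001155662455504966
  (by decide +kernel)

def ng72 : List (List ℕ) :=
  [2214, 2280, 2347, 2380, 2478, 2159, 2192, 3208] :: ng71

theorem ref72 : AllRef ng72 := allRef_cons ref71
  17878226128176536853076137772496347164956457367302518628841161578196529859121736254338637066481793708941862576285655045604533159540877404677370021338939197594045222863071729361180137079938115184586917329773651731030649649450426861517870158628951879358909093817854333029055463483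
  (by decide +kernel)

def ng73 : List (List ℕ) :=
  [2214, 2280, 2347, 2380, 2478, 2159, 2192] :: ng72

theorem ref73 : AllRef ng73 := allRef_cons ref72
  7711936366702376510776066155055154951196408612588606233139951631997135863956588247781382146842741456766375868182979237492002254904723796107395428040712334974573548698136246618729940275335640012751255273803103632090712489968445027017731347812240226917177972449910473289982569109874444575498088315460292636392011687971626749015103597081175879843902
  (by decide +kernel)

def ng74 : List (List ℕ) :=
  [2214, 2280, 2347, 2380] :: ng73

theorem ref74 : AllRef ng74 := allRef_cons ref73
  45672356742733117036247276474753400870117720290437219202853638877129413086766829358856074696480386883772106846491185508780853752012012712989004214761298064945941502661143178349601700998534621786773574056916678104563769496684143226418827386815125628670812502098979187223559042503736387406733671143711143958267475269321285795976549948515810533015797655931132383294450270276101245153985061910679976009924399335405860537144549819475349041565992599122629175051335627036635902549388616560645062004023712861053680183909616151353694107392309171714843424671054565865414145872777265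
  (by decide +kernel)

def ng75 : List (List ℕ) :=
  [2214, 2280, 2347, 2156] :: ng74

theorem ref75 : AllRef ng75 := allRef_cons ref74
  440725418363532470059267442776275291500661643220128263924636246453559379777378053917753862516676445446037593176545942003138022630856692022190265052596861888456102749583177625222913627294141412133900239415404145585428295343285479149593444174815790
  (by decide +kernel)

def ng76 : List (List ℕ) :=
  [2214, 2280, 2347] :: ng75

theorem ref76 : AllRef ng76 := allRef_cons ref75
  860791831946385092327266696949585524842253590707894858930926841910681178317727103163535247006837138348831152811251666225575138096097875895482825412536687612212316979044223033736430108164966257463941466675595157113792978913199090600255651053616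
  (by decide +kernel)

def ng77 : List (List ℕ) :=
  [2214, 2280, 2155, 2185] :: ng76

theorem ref77 : AllRef ng77 := allRef_cons ref76
  1995533975290895570663066304416648290783118181508547559516097127915586093878194945204308401882583991810275351208168516836158321748434077236623840616254394525348500922469449774
  (by decide +kernel)

def ng78 : List (List ℕ) :=
  [2214, 2280, 2155] :: ng77

theorem ref78 : AllRef ng78 := allRef_cons ref77
  860791832741286484631741349674295959362086286272365687834019272016882464591538583333323324782938098987518312500004232960968580167430652418502664969198756038520765182608403130788333679645325088129812304507231379034907951416814942841199856189485
  (by decide +kernel)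

def ng79 : List (List ℕ) :=
  [2214, 2280] :: ng78

theorem ref79 : AllRef ng79 := allRef_cons ref78
  371310430430220225621957133357627496556039111687492068667070817107439195887726095853925468726957824108259589374161172380257871212340319116251745789497522382748764289789871039176407352746219069775333275870846887780699664082131813629104950101480914638768834002934284365021835396871688271735524942523203288955879471
  (by decide +kernel)

def ng80 : List (List ℕ) :=
  [2214, 2151, 2184] :: ng79

theorem ref80 : AllRef ng80 := allRef_cons ref79
  860791832740898734141403550543276084846291086030544863835617847660426606241632948798630445399033728005402607293627811202084692185691579667516690984245677782191937274886436689673428561375852370855791008193713567570315463661779334640945177559085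
  (by decide +kernel)

def ng81 : List (List ℕ) :=
  [2214, 2151] :: ng80

theorem ref81 : AllRef ng81 := allRef_cons ref80
  371310430435415904411645181485321240693356700598664994597440187709716993313534101623178547739138572799303520605715907351101459645072908034300152744601333652984250009231581417843045416055924453365177026271242113938378442290776067677473951413936058840662210009313665254999224856284404362299390557635744205362954284
  (by decide +kernel)

def ng82 : List (List ℕ) :=
  [2214] :: ng81

theorem ref82 : AllRef ng82 := allRef_cons ref81
  160168150424143299190675667668122891654527477199332954126041734810181373846483134477165461413505549906251497051504940166477746499989693815373466805131116824745614470007624718264348683221661504301157426466223396368595478880628941041700583505301790860423086690329393550649665681326997083066938770857905268324755819903280054204502057073294933175532275090650294462852632646739973636139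
  (by decide +kernel)

def ng83 : List (List ℕ) :=
  [2149] :: ng82

theorem ref83 : AllRef ng83 := allRef_cons ref82
  160168150424143301463378273097032019452075732754590997899430780753156038168779800675005834770776562265872021226165971061038568832076605361539288762741407196272469617041145438603422578404032173863256890790114994585985231186273947015889000984213250465532907433603309504133124486628502286586274956640395001156994557870550899265203067276439078064992686236514823605646401780859273216077
  (by decide +kernel)

def ng84 : List (List ℕ) :=
  [] :: ng83

theorem ref84 : AllRef ng84 := allRef_cons ref83
  69089996691377032542562050480145913038816052393011734555072955446492501979553149031355793786999978489543364938771551577441371466905146502383491377888684354391833288586267110551003925772187729383672726803006076622283699846457945296564292625114037400176110235192217755726917978892656124269406706733756236109949848401007688412409815194343202247326965334830678203919871557863558085250489479003707338108590344925754300005236941662633196053782805616787497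
  (by decide +kernel)

theorem no_sol (L : ℕ → ℕ → ℕ → Prop) : ¬ Sol L := fun h =>
  ref84 [] List.mem_cons_self L h (fun _ ht => absurd ht (by simp))


/-! ### Counting in partial triple systems of order 16 -/

section
variable {B : Finset (Finset (Fin 16))}

/-- Points joined to `x` by some triple. -/
def nbr (B : Finset (Finset (Fin 16))) (x : Fin 16) : Finset (Fin 16) :=
  (B.filter (fun T => x ∈ T)).biUnion (fun T => T.erase x)

/-- Points not joined to `x`. -/
def leave (B : Finset (Finset (Fin 16))) (x : Fin 16) : Finset (Fin 16) :=
  (Finset.univ.erase x) \ nbr B x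

def deg (B : Finset (Finset (Fin 16))) (x : Fin 16) : ℕ := (B.filter (fun T => x ∈ T)).card

theorem mem_nbr {x y : Fin 16} : y ∈ nbr B x ↔ y ≠ x ∧ ∃ T ∈ B, x ∈ T ∧ y ∈ T := by
  simp only [nbr, Finset.mem_biUnion, Finset.mem_filter, Finset.mem_erase]
  constructor
  · rintro ⟨T, ⟨h1, h2⟩, h3, h4⟩
    exact ⟨h3, T, h1, h2, h4⟩
  · rintro ⟨h3, T, h1, h2, h4⟩
    exact ⟨T, ⟨h1, h2⟩, h3, h4⟩

theorem mem_leave {x y : Fin 16} :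
    y ∈ leave B x ↔ y ≠ x ∧ ¬ ∃ T ∈ B, x ∈ T ∧ y ∈ T := by
  simp only [leave, Finset.mem_sdiff, Finset.mem_erase, mem_nbr, Finset.mem_univ, and_true]
  constructor
  · rintro ⟨h1, h2⟩
    exact ⟨h1, fun h => h2 ⟨h1, h⟩⟩
  · rintro ⟨h1, h2⟩
    exact ⟨h1, fun h => h2 h.2⟩

theorem leave_symm {x y : Fin 16} (h : y ∈ leave B x) : x ∈ leave B y := by
  rw [mem_leave] at h ⊢
  refine ⟨h.1.symm, fun ⟨T, h1, h2, h3⟩ => h.2 ⟨T, h1, h3, h2⟩⟩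

theorem pts_eq (hB : isPTS B) {x y : Fin 16} (hxy : x ≠ y) {T T' : Finset (Fin 16)} (h : T ∈ B)
    (h' : T' ∈ B) (hx : x ∈ T) (hy : y ∈ T) (hx' : x ∈ T') (hy' : y ∈ T') : T = T' := by
  refine hB.2 {x, y} (Finset.card_pair hxy) T h T' h' ?_ ?_
  · intro z hz
    simp only [Finset.mem_insert, Finset.mem_singleton] at hz
    rcases hz with rfl | rfl <;> assumption
  · intro z hz
    simp only [Finset.mem_insert, Finset.mem_singleton] at hz
    rcases hz with rfl | rfl <;> assumption

theorem card_nbr (hB : isPTS B) (x : Fin 16) : (nbr B x).card = 2 * deg B x := by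
  unfold nbr deg
  rw [Finset.card_biUnion]
  · rw [Finset.sum_congr rfl (g := fun _ => 2), Finset.sum_const, smul_eq_mul, mul_comm]
    intro T hT
    rw [Finset.mem_filter] at hT
    rw [Finset.card_erase_of_mem hT.2, hB.1 T hT.1]
  · intro T hT T' hT' hne
    simp only [Finset.coe_filter, Set.mem_ofPred_eq] at hT hT'
    rw [Function.onFun, Finset.disjoint_left]
    intro y hy hy'
    rw [Finset.mem_erase] at hy hy'
    exact hne (pts_eq hB hy.1.symm hT.1 hT'.1 hT.2 hy.2 hT'.2 hy'.2)

theorem card_leave (hB : isPTS B) (x : Fin 16) : (leave B x).card + 2 * deg B x = 15 := by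
  have hsub : nbr B x ⊆ Finset.univ.erase x := by
    intro y hy
    simpa using (mem_nbr.1 hy).1
  rw [← card_nbr hB, leave, Finset.card_sdiff_add_card_eq_card hsub]
  simp

theorem sum_deg (hB : isPTS B) : ∑ x, deg B x = 3 * B.card := by
  have h := Finset.sum_card_bipartiteAbove_eq_sum_card_bipartiteBelow
    (fun (x : Fin 16) (T : Finset (Fin 16)) => x ∈ T) (s := Finset.univ) (t := B)
  have h2 : ∀ T ∈ B, (Finset.bipartiteBelow (fun (x : Fin 16) (T : Finset (Fin 16)) => x ∈ T)
      Finset.univ T).card = 3 := by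
    intro T hT
    rw [← hB.1 T hT]
    congr 1
    ext x
    simp [Finset.bipartiteBelow]
  rw [Finset.sum_congr rfl h2] at h
  rw [Finset.sum_const, smul_eq_mul] at h
  rw [mul_comm 3, ← h]
  rfl

theorem deg_le (hB : isPTS B) (x : Fin 16) : deg B x ≤ 7 := by
  have := card_leave hB x
  omega

theorem card_le (hB : isPTS B) : B.card ≤ 37 := by
  have h := sum_deg hB
  have h2 : ∑ x, deg B x ≤ ∑ _x : Fin 16, 7 := Finset.sum_le_sum (fun x _ => deg_le hB x)
  simp only [Finset.sum_const, Finset.card_univ, Fintype.card_fin, smul_eq_mul] at h2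
  omega

theorem exists_special (hB : isPTS B) (hc : B.card = 37) :
    ∃ x, (leave B x).card = 3 ∧ ∀ y, y ≠ x → (leave B y).card = 1 := by
  have h := sum_deg hB
  have h2 : ∑ x, (7 - deg B x) + ∑ x, deg B x = ∑ _x : Fin 16, 7 := by
    rw [← Finset.sum_add_distrib]
    refine Finset.sum_congr rfl fun x _ => ?_
    have := deg_le hB x
    omega
  simp only [Finset.sum_const, Finset.card_univ, Fintype.card_fin, smul_eq_mul] at h2
  have h3 : ∑ x, (7 - deg B x) = 1 := by omega
  obtain ⟨x, -, hx⟩ : ∃ x ∈ (Finset.univ : Finset (Fin 16)), 7 - deg B x ≠ 0 := by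
    apply Finset.exists_ne_zero_of_sum_ne_zero
    omega
  have h4 := Finset.add_sum_erase Finset.univ (fun x => 7 - deg B x) (Finset.mem_univ x)
  have h5 : ∑ y ∈ Finset.univ.erase x, (7 - deg B y) = 0 := by omega
  refine ⟨x, ?_, fun y hy => ?_⟩
  · have := card_leave hB x
    omega
  · have h6 := (Finset.sum_eq_zero_iff.1 h5) y (by simpa using hy)
    have := card_leave hB y
    have := deg_le hB y
    omega

end

/-! ### From a system to a line relation on 17 points -/

section
variable {B : Finset (Finset (Fin 16))}

def Tri (B : Finset (Finset (Fin 16))) (x y z : Fin 16) : Prop :=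
  x ≠ y ∧ x ≠ z ∧ y ≠ z ∧ ({x, y, z} : Finset (Fin 16)) ∈ B

theorem Tri.swap {x y z : Fin 16} (h : Tri B x y z) : Tri B y x z := by
  refine ⟨h.1.symm, h.2.2.1, h.2.1, ?_⟩
  rw [Finset.insert_comm]; exact h.2.2.2

theorem Tri.rot {x y z : Fin 16} (h : Tri B x y z) : Tri B x z y := by
  refine ⟨h.2.1, h.1, h.2.2.1.symm, ?_⟩
  rw [Finset.pair_comm]; exact h.2.2.2

theorem Tri.uniq (hB : isPTS B) {x y z w : Fin 16} (h : Tri B x y z) (h' : Tri B x y w) :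
    z = w := by
  have e := pts_eq hB h.1 h.2.2.2 h'.2.2.2 (by simp) (by simp) (by simp) (by simp)
  have hz : z ∈ ({x, y, w} : Finset (Fin 16)) := by rw [← e]; simp
  simp only [Finset.mem_insert, Finset.mem_singleton] at hz
  rcases hz with rfl | rfl | rfl
  · exact absurd rfl h.2.1
  · exact absurd rfl h.2.2.1
  · rfl

theorem Tri.exists (hB : isPTS B) {x y : Fin 16} (hxy : x ≠ y)
    (h : ∃ T ∈ B, x ∈ T ∧ y ∈ T) : ∃ z, Tri B x y z := by
  obtain ⟨T, hT, hx, hy⟩ := h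
  have h3 := hB.1 T hT
  have h1 : ((T.erase x).erase y).card = 1 := by
    rw [Finset.card_erase_of_mem (by simp [hxy.symm, hy]), Finset.card_erase_of_mem hx, h3]
  obtain ⟨z, hz⟩ := Finset.card_eq_one.1 h1
  have hzm : z ∈ (T.erase x).erase y := by rw [hz]; simp
  simp only [Finset.mem_erase] at hzm
  refine ⟨z, hxy, hzm.2.1.symm, hzm.1.symm, ?_⟩
  have : ({x, y, z} : Finset (Fin 16)) = T := by
    apply Finset.eq_of_subset_of_card_le
    · intro t ht
      simp only [Finset.mem_insert, Finset.mem_singleton] at ht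
      rcases ht with rfl | rfl | rfl
      · exact hx
      · exact hy
      · exact hzm.2.2
    · rw [h3, Finset.card_eq_three.2 ⟨x, y, z, hxy, hzm.2.1.symm, hzm.1.symm, rfl⟩]
  rw [this]; exact hT

theorem Tri.covered {x y z : Fin 16} (h : Tri B x y z) : y ∉ leave B x := fun hc =>
  (mem_leave.1 hc).2 ⟨_, h.2.2.2, by simp, by simp⟩

theorem Tri.no_pasch (hB : isPTS B) (hP : ∀ P, ¬ isPasch B P) {a b c d e f : Fin 16}
    (h1 : Tri B a b c) (h2 : Tri B a d e) (h3 : Tri B b d f) (h4 : Tri B c e f)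
    (hdc : d ≠ c) : False := by
  have ab := h1.1
  have ac := h1.2.1
  have bc := h1.2.2.1
  have ad := h2.1
  have ae := h2.2.1
  have de := h2.2.2.1
  have bd := h3.1
  have bf := h3.2.1
  have df := h3.2.2.1
  have ce := h4.1
  have cf := h4.2.1
  have ef := h4.2.2.1
  have be : b ≠ e := by
    rintro rfl
    exact hdc (h2.rot.uniq hB h1)
  have af : a ≠ f := by
    rintro rfl
    exact hdc (h3.rot.uniq hB h1.swap)
  refine hP _ ⟨a, b, c, d, e, f, ?_, rfl, ?_⟩
  · repeat rw [Finset.card_insert_of_notMem]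
    all_goals simp [*, hdc.symm]
  · intro T hT
    simp only [Finset.mem_insert, Finset.mem_singleton] at hT
    rcases hT with rfl | rfl | rfl | rfl
    · exact h1.2.2.2
    · exact h2.2.2.2
    · exact h3.2.2.2
    · exact h4.2.2.2

theorem Tri.no_mitre (hB : isPTS B) (hM : ∀ M, ¬ isMitre B M) {a b c d e f g : Fin 16}
    (h1 : Tri B a b c) (h2 : Tri B a d e) (h3 : Tri B a f g) (h4 : Tri B b d f)
    (h5 : Tri B c e g) (hdc : d ≠ c) : False := by
  have ab := h1.1
  have ac := h1.2.1
  have bc := h1.2.2.1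
  have ad := h2.1
  have ae := h2.2.1
  have de := h2.2.2.1
  have af := h3.1
  have ag := h3.2.1
  have fg := h3.2.2.1
  have bd := h4.1
  have bf := h4.2.1
  have df := h4.2.2.1
  have ce := h5.1
  have cg := h5.2.1
  have eg := h5.2.2.1
  have be : b ≠ e := by
    rintro rfl
    exact hdc (h2.rot.uniq hB h1)
  have cf : c ≠ f := by
    rintro rfl
    exact ad.symm (h4.rot.uniq hB h1.swap.rot)
  have bg : b ≠ g := by
    rintro rfl
    exact cf.symm (h3.rot.uniq hB h1)
  have ef : e ≠ f := by
    rintro rfl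
    exact ab (h2.swap.rot.uniq hB h4.swap.rot)
  have dg : d ≠ g := by
    rintro rfl
    exact ef.symm (h3.rot.uniq hB h2)
  refine hM _ ⟨a, b, c, d, e, f, g, ?_, rfl, ?_⟩
  · repeat rw [Finset.card_insert_of_notMem]
    all_goals simp [*, hdc.symm]
  · intro T hT
    simp only [Finset.mem_insert, Finset.mem_singleton] at hT
    rcases hT with rfl | rfl | rfl | rfl | rfl
    · exact h1.2.2.2
    · exact h2.2.2.2
    · exact h3.2.2.2
    · exact h4.2.2.2
    · exact h5.2.2.2

/-- Uncovered pair avoiding the special point. -/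
def Mat (B : Finset (Finset (Fin 16))) (x₀ x y : Fin 16) : Prop :=
  y ∈ leave B x ∧ x ≠ x₀ ∧ y ≠ x₀

def Q (B : Finset (Finset (Fin 16))) (x₀ : Fin 16) :
    Option (Fin 16) → Option (Fin 16) → Option (Fin 16) → Prop
  | some x, some y, some z => Tri B x y z
  | some x, some y, none => Mat B x₀ x y
  | some x, none, some y => Mat B x₀ x y
  | none, some x, some y => Mat B x₀ x y
  | _, _, _ => False

def dec (e : Equiv.Perm (Fin 16)) (a : ℕ) : Option (Fin 16) :=
  if a = 17 then none else some (e (Fin.ofNat 16 (a - 1)))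

theorem dec_some (e : Equiv.Perm (Fin 16)) {a : ℕ} (h : a ≤ 16) :
    dec e a = some (e (Fin.ofNat 16 (a - 1))) := by
  unfold dec; rw [if_neg (by omega)]

theorem ofNat_inj {a b : ℕ} (ha : 1 ≤ a) (ha' : a ≤ 16) (hb : 1 ≤ b) (hb' : b ≤ 16)
    (h : Fin.ofNat 16 (a - 1) = Fin.ofNat 16 (b - 1)) : a = b := by
  have := congrArg Fin.val h
  simp only [Fin.val_ofNat] at this
  omega

theorem dec_inj (e : Equiv.Perm (Fin 16)) {a b : ℕ} (ha : a ∈ pts17) (hb : b ∈ pts17)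
    (h : dec e a = dec e b) : a = b := by
  rw [mem_pts17] at ha hb
  unfold dec at h
  split_ifs at h with h1 h2 h2
  · omega
  · exact ofNat_inj ha.1 (by omega) hb.1 (by omega) (e.injective (Option.some.inj h))

theorem dec_surj (e : Equiv.Perm (Fin 16)) (p : Option (Fin 16)) : ∃ a ∈ pts17, dec e a = p := by
  cases p with
  | none => exact ⟨17, by decide, rfl⟩
  | some x =>
    have hlt := (e.symm x).isLt
    refine ⟨(e.symm x).val + 1, mem_pts17.2 ⟨by omega, by omega⟩, ?_⟩
    rw [dec_some e (by omega)]
    congr 1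
    have : Fin.ofNat 16 ((e.symm x).val + 1 - 1) = e.symm x := by
      apply Fin.ext
      simp only [Fin.val_ofNat]
      omega
    rw [this, Equiv.apply_symm_apply]

theorem lv_spec : ∀ a ∈ pts17, ∀ b ∈ pts17, (lv a b = true ↔
    (a = 1 ∧ 2 ≤ b ∧ b ≤ 4) ∨ (b = 1 ∧ 2 ≤ a ∧ a ≤ 4) ∨ (a = 17 ∧ b ≤ 4) ∨
      (b = 17 ∧ a ≤ 4)) := by decide

theorem sol_of_pts (hB : isPTS B) (hM : ∀ M, ¬ isMitre B M) (hP : ∀ P, ¬ isPasch B P)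
    (x₀ : Fin 16) (h1 : ∀ y, y ≠ x₀ → (leave B y).card = 1)
    (e : Equiv.Perm (Fin 16)) (he0 : e 0 = x₀) (he : leave B x₀ = {e 1, e 2, e 3}) :
    Sol (fun a b c => (a ∈ pts17 ∧ b ∈ pts17 ∧ c ∈ pts17) ∧
      Q B x₀ (dec e a) (dec e b) (dec e c)) := by
  have Msymm : ∀ {x y}, Mat B x₀ x y → Mat B x₀ y x := fun h => ⟨leave_symm h.1, h.2.2, h.2.1⟩
  have Muniq : ∀ {x y z}, Mat B x₀ x y → Mat B x₀ x z → y = z := by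
    intro x y z hy hz
    exact Finset.card_le_one.1 (h1 x hy.2.1).le y hy.1 z hz.1
  have Mleave : ∀ {x y}, Mat B x₀ x y → x ∉ leave B x₀ := by
    intro x y hy hx
    exact hy.2.2 (Finset.card_le_one.1 (h1 x hy.2.1).le y hy.1 x₀ (leave_symm hx))
  have one : ∀ {a}, a ∈ pts17 → (dec e a = some x₀ ↔ a = 1) := by
    intro a ha
    constructor
    · intro h
      apply dec_inj e ha (by decide)
      rw [h, ← he0]; rfl
    · rintro rfl
      rw [← he0]; rfl
  have low : ∀ {a}, a ∈ pts17 → ∀ {x}, dec e a = some x → (x ∈ leave B x₀ ↔ 2 ≤ a ∧ a ≤ 4) := by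
    intro a ha x hx
    rw [he]
    simp only [Finset.mem_insert, Finset.mem_singleton]
    constructor
    · rintro (rfl | rfl | rfl)
      · have : a = 2 := dec_inj e ha (by decide) (by rw [hx]; rfl)
        omega
      · have : a = 3 := dec_inj e ha (by decide) (by rw [hx]; rfl)
        omega
      · have : a = 4 := dec_inj e ha (by decide) (by rw [hx]; rfl)
        omega
    · rintro ⟨h2, h4⟩
      interval_cases a
      · left; exact (Option.some.inj hx).symm
      · right; left; exact (Option.some.inj hx).symm
      · right; right; exact (Option.some.inj hx).symm
  have none17 : ∀ {a}, a ∈ pts17 → (dec e a = none ↔ a = 17) := by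
    intro a ha
    constructor
    · intro h
      exact dec_inj e ha (by decide) (by rw [h]; rfl)
    · rintro rfl; rfl
  have Qswap : ∀ p q r, Q B x₀ p q r → Q B x₀ q p r := by
    rintro (_ | x) (_ | y) (_ | z) h <;> simp only [Q] at h ⊢
    · exact h
    · exact h
    · exact Msymm h
    · exact h.swap
  have Qrot : ∀ p q r, Q B x₀ p q r → Q B x₀ p r q := by
    rintro (_ | x) (_ | y) (_ | z) h <;> simp only [Q] at h ⊢
    · exact Msymm h
    · exact h
    · exact h
    · exact h.rot
  have Qne : ∀ p q r, Q B x₀ p q r → p ≠ q := by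
    rintro (_ | x) (_ | y) (_ | z) h <;> simp only [Q] at h <;> intro hpq
    · exact absurd hpq (by simp)
    · exact absurd hpq (by simp)
    · exact (mem_leave.1 h.1).1 (Option.some.inj hpq).symm
    · exact h.1 (Option.some.inj hpq)
  have Quniq : ∀ p q r t, Q B x₀ p q r → Q B x₀ p q t → r = t := by
    rintro (_ | x) (_ | y) (_ | z) (_ | w) h h' <;> simp only [Q] at h h' ⊢
    · rw [Muniq h h']
    · rw [Muniq h h']
    · exact absurd h.1 h'.covered
    · exact absurd h'.1 h.covered
    · rw [h.uniq hB h']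
  have real : ∀ {a b c}, Real (fun a b c => (a ∈ pts17 ∧ b ∈ pts17 ∧ c ∈ pts17) ∧
      Q B x₀ (dec e a) (dec e b) (dec e c)) a b c →
      Tri B (e (Fin.ofNat 16 (a - 1))) (e (Fin.ofNat 16 (b - 1))) (e (Fin.ofNat 16 (c - 1))) := by
    rintro a b c ⟨⟨-, h⟩, ha, hb, hc⟩
    rw [dec_some e ha, dec_some e hb, dec_some e hc] at h
    exact h
  have dne : ∀ {c d : ℕ}, 1 ≤ c → c ≤ 16 → 1 ≤ d → d ≤ 16 → d ≠ c →
      e (Fin.ofNat 16 (d - 1)) ≠ e (Fin.ofNat 16 (c - 1)) := by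
    intro c d hc hc' hd hd' hdc h
    exact hdc (ofNat_inj hd hd' hc hc' (e.injective h))
  constructor
  · constructor
    · exact fun ⟨⟨h1, h2, h3⟩, h4⟩ => ⟨⟨h2, h1, h3⟩, Qswap _ _ _ h4⟩
    · exact fun ⟨⟨h1, h2, h3⟩, h4⟩ => ⟨⟨h1, h3, h2⟩, Qrot _ _ _ h4⟩
    · rintro a b c ⟨h1, h2⟩ rfl
      exact Qne _ _ _ h2 rfl
    · exact fun ⟨⟨h1, h2, h3⟩, h4⟩ => (mem_pts17.1 h1).1
    · exact fun ⟨⟨h1, h2, h3⟩, h4⟩ => (mem_pts17.1 h1).2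
    · rintro a b c d ⟨⟨h1, h2, h3⟩, h4⟩ ⟨⟨h5, h6, h7⟩, h8⟩
      exact dec_inj e h3 h7 (Quniq _ _ _ _ h4 h8)
  · intro a b ha ha' hb hb' hab hlv
    have ma := mem_pts17.2 ⟨ha, ha'⟩
    have mb := mem_pts17.2 ⟨hb, hb'⟩
    have hlv' : ¬ lv a b = true := by rw [hlv]; decide
    rw [lv_spec a ma b mb] at hlv'
    push Not at hlv'
    suffices h : ∃ p, Q B x₀ (dec e a) (dec e b) p by
      obtain ⟨p, hp⟩ := h
      obtain ⟨c, mc, rfl⟩ := dec_surj e p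
      exact ⟨c, ⟨ma, mb, mc⟩, hp⟩
    have inf : ∀ {a x}, a ∈ pts17 → dec e a = some x → 5 ≤ a → ∃ y, Mat B x₀ x y := by
      intro a x ma hx h5
      have hx0 : x ≠ x₀ := by
        rintro rfl
        have := (one ma).1 hx
        omega
      obtain ⟨y, hy⟩ := Finset.card_eq_one.1 (h1 x hx0)
      have hym : y ∈ leave B x := by rw [hy]; simp
      refine ⟨y, hym, hx0, ?_⟩
      rintro rfl
      have := (low ma hx).1 (leave_symm hym)
      omega
    cases hda : dec e a with
    | none =>
      have ha17 := (none17 ma).1 hda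
      cases hdb : dec e b with
      | none => exact absurd (dec_inj e ma mb (by rw [hda, hdb])) hab
      | some y =>
        obtain ⟨z, hz⟩ := inf mb hdb (by have := hlv'.2.2.1 ha17; omega)
        exact ⟨some z, hz⟩
    | some x =>
      cases hdb : dec e b with
      | none =>
        have hb17 := (none17 mb).1 hdb
        obtain ⟨z, hz⟩ := inf ma hda (by have := hlv'.2.2.2 hb17; omega)
        exact ⟨some z, hz⟩
      | some y =>
        have hxy : x ≠ y := by
          rintro rfl
          exact hab (dec_inj e ma mb (by rw [hda, hdb]))
        by_cases hc : ∃ T ∈ B, x ∈ T ∧ y ∈ T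
        · obtain ⟨z, hz⟩ := Tri.exists hB hxy hc
          exact ⟨some z, hz⟩
        · have hl : y ∈ leave B x := mem_leave.2 ⟨hxy.symm, hc⟩
          refine ⟨none, hl, ?_, ?_⟩
          · rintro rfl
            have i1 := (one ma).1 hda
            have i2 := (low mb hdb).1 hl
            have := hlv'.1 i1 i2.1
            omega
          · rintro rfl
            have i1 := (one mb).1 hdb
            have i2 := (low ma hda).1 (leave_symm hl)
            have := hlv'.2.1 i1 i2.1
            omega
  · rintro a b c ⟨⟨ma, mb, mc⟩, h⟩
    rw [← Bool.not_eq_true, lv_spec a ma b mb]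
    have a1 := (mem_pts17.1 ma).1
    have b1 := (mem_pts17.1 mb).1
    have big : ∀ {a x y}, a ∈ pts17 → dec e a = some x → Mat B x₀ x y → 5 ≤ a := by
      intro a x y ma hx hm
      have i1 : a ≠ 1 := fun h => hm.2.1 (Option.some.inj (hx.symm.trans ((one ma).2 h)))
      have i2 : ¬ (2 ≤ a ∧ a ≤ 4) := fun h => Mleave hm ((low ma hx).2 h)
      have := (mem_pts17.1 ma).1
      omega
    cases hda : dec e a with
    | none =>
      have ha17 := (none17 ma).1 hda
      cases hdb : dec e b with
      | none => exact absurd (by rw [hda, hdb]) (Qne _ _ _ h)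
      | some y =>
        rw [hda, hdb] at h
        cases hdc : dec e c with
        | none => rw [hdc] at h; exact absurd h (by simp [Q])
        | some z =>
          rw [hdc] at h
          have := big mb hdb h
          omega
    | some x =>
      have ha17 : a ≠ 17 := fun h => by
        have := (none17 ma).2 h
        rw [hda] at this
        exact absurd this (by simp)
      cases hdb : dec e b with
      | none =>
        have hb17 := (none17 mb).1 hdb
        rw [hda, hdb] at h
        cases hdc : dec e c with
        | none => rw [hdc] at h; exact absurd h (by simp [Q])
        | some z =>
          rw [hdc] at h
          have := big ma hda h
          omega
      | some y =>
        have hb17 : b ≠ 17 := fun h => by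
          have := (none17 mb).2 h
          rw [hdb] at this
          exact absurd this (by simp)
        rw [hda, hdb] at h
        cases hdc : dec e c with
        | none =>
          rw [hdc] at h
          have := big ma hda h
          have := big mb hdb (Msymm h)
          omega
        | some z =>
          rw [hdc] at h
          have hcov : y ∉ leave B x := Tri.covered h
          have hcov' : x ∉ leave B y := fun hx => hcov (leave_symm hx)
          rintro (hh | hh | hh | hh)
          · have := (one ma).2 hh.1
            rw [hda] at this
            obtain rfl := Option.some.inj this
            exact hcov ((low mb hdb).2 hh.2)
          · have := (one mb).2 hh.1
            rw [hdb] at this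
            obtain rfl := Option.some.inj this
            exact hcov' ((low ma hda).2 hh.2)
          · omega
          · omega
  · intro a b c d e' f h1 h2 h3 h4 hdc
    exact Tri.no_pasch hB hP (real h1) (real h2) (real h3) (real h4)
      (dne (mem_pts17.1 h1.1.1.2.2).1 h1.2.2.2 (mem_pts17.1 h2.1.1.2.1).1 h2.2.2.1 hdc)
  · intro a b c d e' f g h1 h2 h3 h4 h5 hdc
    exact Tri.no_mitre hB hM (real h1) (real h2) (real h3) (real h4) (real h5)
      (dne (mem_pts17.1 h1.1.1.2.2).1 h1.2.2.2 (mem_pts17.1 h2.1.1.2.1).1 h2.2.2.1 hdc)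

theorem exists_perm {x₀ y₁ y₂ y₃ : Fin 16} (h1 : x₀ ≠ y₁) (h2 : x₀ ≠ y₂) (h3 : x₀ ≠ y₃)
    (h4 : y₁ ≠ y₂) (h5 : y₁ ≠ y₃) (h6 : y₂ ≠ y₃) :
    ∃ e : Equiv.Perm (Fin 16), e 0 = x₀ ∧ e 1 = y₁ ∧ e 2 = y₂ ∧ e 3 = y₃ := by
  have inj : Function.Injective ![x₀, y₁, y₂, y₃] := by
    intro i j
    fin_cases i <;> fin_cases j <;> simp [*, Ne.symm h1, Ne.symm h2, Ne.symm h3, Ne.symm h4,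
      Ne.symm h5, Ne.symm h6]
  have inj2 : Function.Injective (![0, 1, 2, 3] : Fin 4 → Fin 16) := by decide
  obtain ⟨g, hg⟩ := (Equiv.Perm.isMultiplyPretransitive (Fin 16) 4).exists_smul_eq
    ⟨![0, 1, 2, 3], inj2⟩ ⟨![x₀, y₁, y₂, y₃], inj⟩
  have key : ∀ i, g ((![0, 1, 2, 3] : Fin 4 → Fin 16) i) = ![x₀, y₁, y₂, y₃] i := fun i =>
    DFunLike.congr_fun hg i
  exact ⟨g, key 0, key 1, key 2, key 3⟩

theorem no_sparse (hB : isPTS B) (hc : B.card = 37) (hM : ∀ M, ¬ isMitre B M)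
    (hP : ∀ P, ¬ isPasch B P) : False := by
  obtain ⟨x₀, h3, h1⟩ := exists_special hB hc
  obtain ⟨y₁, y₂, y₃, h4, h5, h6, hl⟩ := Finset.card_eq_three.1 h3
  have hne : ∀ y ∈ leave B x₀, x₀ ≠ y := fun y hy => (mem_leave.1 hy).1.symm
  obtain ⟨e, e0, e1, e2, e3⟩ := exists_perm (hne y₁ (by rw [hl]; simp))
    (hne y₂ (by rw [hl]; simp)) (hne y₃ (by rw [hl]; simp)) h4 h5 h6
  exact no_sol _ (sol_of_pts hB hM hP x₀ h1 e e0 (by rw [hl, e1, e2, e3]))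

end

/-! ### The anti-mitre example -/

def witL : List (Fin 16 × Fin 16 × Fin 16) := [
  (0, 7, 11), (0, 6, 13), (0, 9, 10), (0, 8, 15), (0, 5, 12), (0, 4, 14),
  (10, 12, 15), (7, 12, 13), (9, 12, 14), (3, 11, 12), (1, 2, 12), (4, 8, 12),
  (2, 8, 9), (1, 4, 9), (6, 9, 11), (3, 5, 9), (9, 13, 15), (2, 4, 11),
  (5, 11, 14), (1, 11, 13), (8, 10, 11), (2, 5, 13), (2, 6, 10), (4, 10, 13),
  (4, 7, 15), (1, 3, 10), (3, 13, 14), (2, 7, 14), (1, 5, 8), (1, 6, 7),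
  (3, 4, 6), (5, 7, 10), (3, 7, 8), (5, 6, 15), (1, 14, 15), (2, 3, 15),
  (6, 8, 14)]

def toT (t : Fin 16 × Fin 16 × Fin 16) : Finset (Fin 16) := {t.1, t.2.1, t.2.2}

def wit : Finset (Finset (Fin 16)) := (witL.map toT).toFinset

def witTab : ℕ :=
  38030799527678959282832806890251257132252487475640690106581170356912668172949178267592104945471090015050578084288520445871183803558734403630296779997684361152734242900480394229805742168071616865254963911567654256936497487461274519561221900594748555042051528247715867316477812832143129129999528123184436647823183899841900026582318986035067749596517438211665760710815784162055461501417166046944936046446056764220932742997083685326380136792237577702337833689849999906385385090180519708098094990335142412874350487825102959615783623648998629978827859349116239503104315511107135830648687151842732595081895848797669797922882842442369264394155978603826057456032406233698447166618496529513631051094867977316274442513563768131804052404058616379616932124988940538321778095484522891907532113380148573634560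


theorem wit_ne : ∀ t ∈ witL, t.1 ≠ t.2.1 ∧ t.1 ≠ t.2.2 ∧ t.2.1 ≠ t.2.2 := by decide +kernel

theorem wit_card : wit.card = 37 := by decide +kernel

theorem witL_tab : ∀ t ∈ witL, ∀ x ∈ [t.1, t.2.1, t.2.2], ∀ y ∈ [t.1, t.2.1, t.2.2],
    ∀ z ∈ [t.1, t.2.1, t.2.2], x = y ∨ x = z ∨ y = z ∨
    th witTab (x.val + 1) (y.val + 1) = z.val + 1 := by decide +kernel

theorem mem_wit {T : Finset (Fin 16)} (h : T ∈ wit) : ∃ t ∈ witL, T = toT t := by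
  unfold wit at h
  rw [List.mem_toFinset, List.mem_map] at h
  obtain ⟨t, ht, e⟩ := h
  exact ⟨t, ht, e.symm⟩

theorem wit_card3 : ∀ T ∈ wit, T.card = 3 := by
  intro T hT
  obtain ⟨t, ht, rfl⟩ := mem_wit hT
  obtain ⟨h1, h2, h3⟩ := wit_ne t ht
  exact Finset.card_eq_three.2 ⟨_, _, _, h1, h2, h3, rfl⟩

theorem wit_tab : ∀ T ∈ wit, ∀ x ∈ T, ∀ y ∈ T, ∀ z ∈ T, x = y ∨ x = z ∨ y = z ∨
    th witTab (x.val + 1) (y.val + 1) = z.val + 1 := by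
  intro T hT x hx y hy z hz
  obtain ⟨t, ht, rfl⟩ := mem_wit hT
  have conv : ∀ {w : Fin 16}, w ∈ toT t → w ∈ [t.1, t.2.1, t.2.2] := by
    intro w hw
    simpa [toT] using hw
  exact witL_tab t ht x (conv hx) y (conv hy) z (conv hz)

theorem wit_sub {a b : Fin 16} (hab : a ≠ b) {T T' : Finset (Fin 16)} (hT : T ∈ wit)
    (hT' : T' ∈ wit) (ha : a ∈ T) (hb : b ∈ T) (ha' : a ∈ T') (hb' : b ∈ T') : T ⊆ T' := by
  intro z hz
  rcases wit_tab T hT a ha b hb z hz with e | e | e | e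
  · exact absurd e hab
  · rwa [← e]
  · rwa [← e]
  · have h1 : ((T'.erase a).erase b).card = 1 := by
      rw [Finset.card_erase_of_mem (by simp [hab.symm, hb']), Finset.card_erase_of_mem ha',
        wit_card3 T' hT']
    obtain ⟨w, hw⟩ := Finset.card_eq_one.1 h1
    have hwm : w ∈ (T'.erase a).erase b := by rw [hw]; simp
    simp only [Finset.mem_erase] at hwm
    rcases wit_tab T' hT' a ha' b hb' w hwm.2.2 with e' | e' | e' | e'
    · exact absurd e' hab
    · exact absurd e'.symm hwm.2.1
    · exact absurd e'.symm hwm.1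
    · have : z = w := Fin.ext (by omega)
      rw [this]
      exact hwm.2.2

theorem wit_pts : isPTS wit := by
  refine ⟨wit_card3, fun p hp T hT T' hT' h h' => ?_⟩
  obtain ⟨a, b, hab, rfl⟩ := Finset.card_eq_two.1 hp
  have ha : a ∈ ({a, b} : Finset (Fin 16)) := by simp
  have hb : b ∈ ({a, b} : Finset (Fin 16)) := by simp
  exact Finset.Subset.antisymm (wit_sub hab hT hT' (h ha) (h hb) (h' ha) (h' hb))
    (wit_sub hab hT' hT (h' ha) (h' hb) (h ha) (h hb))

theorem wit_check : ∀ a ∈ pts16, ∀ b ∈ pts16, th witTab a b ≠ 0 → ∀ d ∈ pts16,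
    th witTab a d ≠ 0 → th witTab b d ≠ 0 → d ≠ th witTab a b →
    th witTab a (th witTab b d) ≠ 0 →
    th witTab (th witTab a b) (th witTab a d) ≠ th witTab a (th witTab b d) := by
  decide +kernel

theorem mem_pts16 (x : Fin 16) : x.val + 1 ∈ pts16 := by
  revert x; decide

theorem wit_no_mitre (M : Finset (Finset (Fin 16))) : ¬ isMitre wit M := by
  rintro ⟨a, b, c, d, e, f, g, hcard, rfl, hsub⟩
  have key : ∀ {x y z : Fin 16}, ({x, y, z} : Finset (Fin 16)) ∈ wit →
      th witTab (x.val + 1) (y.val + 1) = z.val + 1 := by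
    intro x y z h
    have h3 := wit_card3 _ h
    rcases wit_tab _ h x (by simp) y (by simp) z (by simp) with e | e | e | e
    · subst e
      rw [Finset.insert_eq_of_mem (by simp)] at h3
      exact absurd (h3 ▸ Finset.card_le_two) (by decide)
    · subst e
      rw [Finset.insert_eq_of_mem (by simp)] at h3
      exact absurd (h3 ▸ Finset.card_le_two) (by decide)
    · subst e
      rw [Finset.pair_eq_singleton] at h3
      exact absurd (h3 ▸ Finset.card_le_two) (by decide)
    · exact e
  have m1 := key (hsub (by simp : ({a, b, c} : Finset (Fin 16)) ∈ _))
  have m2 := key (hsub (by simp : ({a, d, e} : Finset (Fin 16)) ∈ _))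
  have m3 := key (hsub (by simp : ({a, f, g} : Finset (Fin 16)) ∈ _))
  have m4 := key (hsub (by simp : ({b, d, f} : Finset (Fin 16)) ∈ _))
  have m5 := key (hsub (by simp : ({c, e, g} : Finset (Fin 16)) ∈ _))
  have hdc : d ≠ c := by
    rintro rfl
    have : ({a, b, d, d, e, f, g} : Finset (Fin 16)) = {a, b, d, e, f, g} := by simp
    rw [this] at hcard
    exact absurd (hcard ▸ Finset.card_le_six) (by decide)
  have := wit_check _ (mem_pts16 a) _ (mem_pts16 b) (by rw [m1]; omega) _ (mem_pts16 d)
    (by rw [m2]; omega) (by rw [m4]; omega)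
    (by rw [m1]; intro h; exact hdc (Fin.ext (by omega))) (by rw [m4, m3]; omega)
  rw [m1, m2, m4, m3, m5] at this
  exact this rfl

theorem wit_max : isMMPTS wit :=
  ⟨wit_pts, fun _ hB' => by rw [wit_card]; exact card_le hB'⟩

theorem card_max {B : Finset (Finset (Fin 16))} (hB : isMMPTS B) : B.card = 37 := by
  have h1 := hB.2 wit wit_pts
  rw [wit_card] at h1
  have h2 := card_le hB.1
  omega


end MM16

theorem mmpts16_antiMitre_exists_but_no_fiveSparse :
    (∃ B : Finset (Finset (Fin 16)), isMMPTS B ∧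
      ∀ M : Finset (Finset (Fin 16)), ¬ isMitre B M) ∧
    (∀ B : Finset (Finset (Fin 16)), isMMPTS B →
      (∀ M : Finset (Finset (Fin 16)), ¬ isMitre B M) →
      ∃ P : Finset (Finset (Fin 16)), isPasch B P) ∧
    (¬ ∃ B : Finset (Finset (Fin 16)), isMMPTS B ∧
      (∀ M : Finset (Finset (Fin 16)), ¬ isMitre B M) ∧
      (∀ P : Finset (Finset (Fin 16)), ¬ isPasch B P)) := by
  refine ⟨⟨MM16.wit, MM16.wit_max, MM16.wit_no_mitre⟩, fun B hB hM => ?_, ?_⟩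
  · by_contra h
    exact MM16.no_sparse hB.1 (MM16.card_max hB) hM (fun P hP => h ⟨P, hP⟩)
  · rintro ⟨B, hB, hM, hP⟩
    exact MM16.no_sparse hB.1 (MM16.card_max hB) hM hP
end

section
/- Let v ≡ 5 (mod 6) and let (V,B) be a PBD(v,{3,5*}) whose unique block of size 5 is {a,b,c,d,e}. Then the system obtained by deleting the block {a,b,c,d,e} from B and adding the two triples {a,c,e} and {b,d,e} is a maximum partial triple system MMPTS(v) of Type-Q whose leave is the 4-cycle {a,b},{b,c},{c,d},{d,a}. -/
def leave {n : ℕ} (B : Finset (Finset (Fin n))) : Set (Finset (Fin n)) :=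
  {p | p.card = 2 ∧ ∀ T ∈ B, ¬ p ⊆ T}

def isTypeQ {n : ℕ} (B : Finset (Finset (Fin n))) : Prop :=
  ∃ a b c d : Fin n, a ≠ b ∧ a ≠ c ∧ a ≠ d ∧ b ≠ c ∧ b ≠ d ∧ c ≠ d ∧
    leave B = {{a, b}, {b, c}, {c, d}, {d, a}} ∧
    ∃ e : Fin n, ({a, c, e} : Finset (Fin n)) ∈ B ∧ ({b, d, e} : Finset (Fin n)) ∈ B

def isPBD35 {n : ℕ} (B : Finset (Finset (Fin n))) : Prop :=
  (∀ T ∈ B, T.card = 3 ∨ T.card = 5) ∧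
  (B.filter fun T => T.card = 5).card = 1 ∧
  ∀ p : Finset (Fin n), p.card = 2 → ∃! T : Finset (Fin n), T ∈ B ∧ p ⊆ T

open Classical in
theorem pts_count {n : ℕ} (B : Finset (Finset (Fin n))) (h : isPTS B) :
    n.choose 2 = 3 * B.card +
      ((Finset.univ.powersetCard 2).filter fun p : Finset (Fin n) => p ∈ leave B).card := by
  have h1 : (B.biUnion fun T => T.powersetCard 2).card = 3 * B.card := by
    rw [Finset.card_biUnion, Finset.sum_congr rfl (g := fun _ => 3)]
    · simp [mul_comm]
    · intro T hT
      rw [Finset.card_powersetCard, h.1 T hT]; rfl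
    · intro T hT S hS hne
      rw [Function.onFun, Finset.disjoint_left]
      intro p hp hq
      rw [Finset.mem_powersetCard] at hp hq
      exact hne (h.2 p hp.2 T hT S hS hp.1 hq.1)
  have h2 : ((Finset.univ.powersetCard 2).filter fun p : Finset (Fin n) => ¬ p ∈ leave B)
      = B.biUnion fun T => T.powersetCard 2 := by
    ext p
    simp only [Finset.mem_filter, Finset.mem_powersetCard, Finset.mem_biUnion,
      Finset.subset_univ, true_and]
    constructor
    · rintro ⟨hp, hl⟩
      by_contra hc
      exact hl ⟨hp, fun T hT hs => hc ⟨T, hT, hs, hp⟩⟩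
    · rintro ⟨T, hT, hs, hp⟩
      exact ⟨hp, fun hl => hl.2 T hT hs⟩
  have h3 := Finset.card_filter_add_card_filter_not (s := (Finset.univ : Finset (Fin n)).powersetCard 2)
    (fun p => p ∈ leave B)
  rw [h2, h1, Finset.card_powersetCard, Finset.card_univ, Fintype.card_fin] at h3
  omega

theorem leave_ne_single {n : ℕ} (hn : n % 2 = 1) (B : Finset (Finset (Fin n))) (h : isPTS B)
    (x y : Fin n) (hxy : x ≠ y) (hl : leave B = {{x, y}}) : False := by
  have h1 : ((B.filter fun T => x ∈ T).biUnion fun T => T.erase x).card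
      = 2 * (B.filter fun T => x ∈ T).card := by
    rw [Finset.card_biUnion, Finset.sum_congr rfl (g := fun _ => 2)]
    · simp [mul_comm]
    · intro T hT
      rw [Finset.mem_filter] at hT
      rw [Finset.card_erase_of_mem hT.2, h.1 T hT.1]
    · intro T hT S hS hne
      rw [Function.onFun, Finset.disjoint_left]
      intro z hp hq
      simp only [Finset.coe_filter, Set.mem_ofPred_eq] at hT hS
      rw [Finset.mem_erase] at hp hq
      refine hne (h.2 {x, z} (Finset.card_pair hp.1.symm) T hT.1 S hS.1 ?_ ?_)
      · simp [Finset.insert_subset_iff, hT.2, hp.2]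
      · simp [Finset.insert_subset_iff, hS.2, hq.2]
  have h2 : ((B.filter fun T => x ∈ T).biUnion fun T => T.erase x)
      = (Finset.univ.erase x).erase y := by
    ext z
    simp only [Finset.mem_biUnion, Finset.mem_filter, Finset.mem_erase, Finset.mem_univ, and_true]
    constructor
    · rintro ⟨T, ⟨hT, hx⟩, hz, hzT⟩
      refine ⟨?_, hz⟩
      rintro rfl
      have : ({x, z} : Finset (Fin n)) ∈ leave B := by rw [hl]; rfl
      exact this.2 T hT (by simp [Finset.insert_subset_iff, hx, hzT])
    · rintro ⟨hzy, hzx⟩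
      by_contra hc
      have : ({x, z} : Finset (Fin n)) ∈ leave B := by
        refine ⟨Finset.card_pair hzx.symm, fun T hT hs => hc ⟨T, ⟨hT, hs (by simp)⟩, hzx, hs (by simp)⟩⟩
      rw [hl, Set.mem_singleton_iff] at this
      have hz : z ∈ ({x, y} : Finset (Fin n)) := by rw [← this]; simp
      simp [hzy, hzx] at hz
  rw [h2, Finset.card_erase_of_mem (by simp [hxy.symm]), Finset.card_erase_of_mem (by simp),
    Finset.card_univ, Fintype.card_fin] at h1
  have := x.2
  have := y.2
  have : x.1 ≠ y.1 := fun h => hxy (Fin.ext h)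
  omega

theorem choose_mod (n : ℕ) (hn : n % 6 = 5) : n.choose 2 % 3 = 1 := by
  obtain ⟨k, rfl⟩ : ∃ k, n = 6 * k + 5 := ⟨n / 6, by omega⟩
  have : (6 * k + 5) * (6 * k + 5 - 1) = 2 * (3 * (6 * k ^ 2 + 9 * k + 3) + 1) := by
    rw [show 6 * k + 5 - 1 = 6 * k + 4 by omega]; ring
  rw [Nat.choose_two_right, this]
  omega

theorem pbd_to_mmpts_typeQ (n : ℕ) (hn : n % 6 = 5)
    (B : Finset (Finset (Fin n))) (hB : isPBD35 B) (a b c d e : Fin n)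
    (hdist : ({a, b, c, d, e} : Finset (Fin n)).card = 5)
    (hmem : ({a, b, c, d, e} : Finset (Fin n)) ∈ B) :
    isMMPTS (insert {a, c, e} (insert {b, d, e} (B.erase {a, b, c, d, e}))) ∧
    isTypeQ (insert {a, c, e} (insert {b, d, e} (B.erase {a, b, c, d, e}))) ∧
    leave (insert {a, c, e} (insert {b, d, e} (B.erase {a, b, c, d, e}))) =
      {{a, b}, {b, c}, {c, d}, {d, a}} := by
  classical
  obtain ⟨hcard, hone, huniq⟩ := hB
  have hne : a ≠ b ∧ a ≠ c ∧ a ≠ d ∧ a ≠ e ∧ b ≠ c ∧ b ≠ d ∧ b ≠ e ∧ c ≠ d ∧ c ≠ e ∧ d ≠ e := by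
    have key : ∀ w x y z : Fin n, ({a, b, c, d, e} : Finset (Fin n)) ⊆ {w, x, y, z} → False := by
      intro w x y z hs
      have := Finset.card_le_card hs
      have := Finset.card_le_four (a := w) (b := x) (c := y) (d := z)
      omega
    refine ⟨?_, ?_, ?_, ?_, ?_, ?_, ?_, ?_, ?_, ?_⟩
    · rintro rfl; exact key a c d e (by intro t; simp; try tauto)
    · rintro rfl; exact key a b d e (by intro t; simp; try tauto)
    · rintro rfl; exact key a b c e (by intro t; simp; try tauto)
    · rintro rfl; exact key a b c d (by intro t; simp; try tauto)
    · rintro rfl; exact key a b d e (by intro t; simp; try tauto)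
    · rintro rfl; exact key a b c e (by intro t; simp; try tauto)
    · rintro rfl; exact key a b c d (by intro t; simp; try tauto)
    · rintro rfl; exact key a b c e (by intro t; simp; try tauto)
    · rintro rfl; exact key a b c d (by intro t; simp; try tauto)
    · rintro rfl; exact key a b c d (by intro t; simp; try tauto)
  obtain ⟨hab, hac, had, hae, hbc, hbd, hbe, hcd, hce, hde⟩ := hne
  generalize hF : ({a, b, c, d, e} : Finset (Fin n)) = F at *
  have hT3 : ∀ T ∈ B, T ≠ F → T.card = 3 := by
    intro T hT hTF
    rcases hcard T hT with h | h
    · exact h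
    · obtain ⟨S, hS⟩ := Finset.card_eq_one.1 hone
      have h1 : T ∈ B.filter fun T => T.card = 5 := by simp [hT, h]
      have h2 : F ∈ B.filter fun T => T.card = 5 := by simp [hmem, hdist]
      rw [hS, Finset.mem_singleton] at h1 h2
      exact absurd (h1.trans h2.symm) hTF
  have hBu : ∀ p : Finset (Fin n), p.card = 2 → ∀ T ∈ B, ∀ S ∈ B, p ⊆ T → p ⊆ S → T = S :=
    fun p hp T hT S hS h1 h2 => (huniq p hp).unique ⟨hT, h1⟩ ⟨hS, h2⟩
  have hAF : ({a, c, e} : Finset (Fin n)) ⊆ F := by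
    rw [← hF]; intro t; simp; tauto
  have hDF : ({b, d, e} : Finset (Fin n)) ⊆ F := by
    rw [← hF]; intro t; simp; tauto
  have hAD : ∀ p : Finset (Fin n), p.card = 2 → p ⊆ {a, c, e} → p ⊆ {b, d, e} → False := by
    intro p hp h1 h2
    have : p ⊆ {e} := by
      intro t ht
      have h3 := h1 ht
      have h4 := h2 ht
      simp only [Finset.mem_insert, Finset.mem_singleton] at h3 h4 ⊢
      grind
    have := Finset.card_le_card this
    simp [hp] at this
  have hpts : isPTS (insert {a, c, e} (insert {b, d, e} (B.erase F))) := by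
    constructor
    · intro T hT
      simp only [Finset.mem_insert, Finset.mem_erase] at hT
      rcases hT with rfl | rfl | ⟨h1, h2⟩
      · exact Finset.card_eq_three.2 ⟨a, c, e, hac, hae, hce, rfl⟩
      · exact Finset.card_eq_three.2 ⟨b, d, e, hbd, hbe, hde, rfl⟩
      · exact hT3 T h2 h1
    · intro p hp T hT S hS h1 h2
      simp only [Finset.mem_insert, Finset.mem_erase] at hT hS
      rcases hT with rfl | rfl | ⟨hTF, hT⟩ <;> rcases hS with rfl | rfl | ⟨hSF, hS⟩
      · rfl
      · exact (hAD p hp h1 h2).elim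
      · exact absurd (hBu p hp S hS F hmem h2 (h1.trans hAF)) hSF
      · exact (hAD p hp h2 h1).elim
      · rfl
      · exact absurd (hBu p hp S hS F hmem h2 (h1.trans hDF)) hSF
      · exact absurd (hBu p hp T hT F hmem h1 (h2.trans hAF)) hTF
      · exact absurd (hBu p hp T hT F hmem h1 (h2.trans hDF)) hTF
      · exact hBu p hp T hT S hS h1 h2
  have hin : ∀ x y : Fin n, x ≠ y → x ∈ F → y ∈ F → ¬ (({x, y} : Finset (Fin n)) ⊆ {a, c, e}) →
      ¬ (({x, y} : Finset (Fin n)) ⊆ {b, d, e}) →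
      ({x, y} : Finset (Fin n)) ∈ leave (insert {a, c, e} (insert {b, d, e} (B.erase F))) := by
    intro x y hxy hx hy h1 h2
    refine ⟨Finset.card_pair hxy, ?_⟩
    intro T hT hs
    simp only [Finset.mem_insert, Finset.mem_erase] at hT
    rcases hT with rfl | rfl | ⟨hTF, hT⟩
    · exact h1 hs
    · exact h2 hs
    · exact hTF (hBu _ (Finset.card_pair hxy) T hT F hmem hs (by simp [Finset.insert_subset_iff, hx, hy]))
  have hleave : leave (insert {a, c, e} (insert {b, d, e} (B.erase F))) =
      {{a, b}, {b, c}, {c, d}, {d, a}} := by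
    apply Set.Subset.antisymm
    · rintro p ⟨hp, hl⟩
      obtain ⟨T, ⟨hT, hpT⟩, -⟩ := huniq p hp
      have hTF : T = F := by
        by_contra hne
        exact hl T (by simp [hT, hne]) hpT
      have hA := hl {a, c, e} (by simp)
      have hD := hl {b, d, e} (by simp)
      obtain ⟨x, y, hxy, rfl⟩ := Finset.card_eq_two.1 hp
      rw [hTF, ← hF] at hpT
      simp only [Finset.insert_subset_iff, Finset.singleton_subset_iff, Finset.mem_insert,
        Finset.mem_singleton] at hpT hA hD
      simp only [Set.mem_insert_iff, Set.mem_singleton_iff]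
      obtain ⟨hx, hy⟩ := hpT
      rcases hx with rfl | rfl | rfl | rfl | rfl <;> rcases hy with rfl | rfl | rfl | rfl | rfl <;>
        first
        | exact absurd rfl hxy
        | (exfalso; apply hA; simp; done)
        | (exfalso; apply hD; simp; done)
        | simp
        | simp [Finset.pair_comm]
    · intro p hp
      simp only [Set.mem_insert_iff, Set.mem_singleton_iff] at hp
      rcases hp with rfl | rfl | rfl | rfl
      all_goals
        apply hin
        · first | assumption | exact had.symm
        · simp [← hF]
        · simp [← hF]
        · simp only [Finset.insert_subset_iff, Finset.singleton_subset_iff, Finset.mem_insert,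
            Finset.mem_singleton]
          grind
        · simp only [Finset.insert_subset_iff, Finset.singleton_subset_iff, Finset.mem_insert,
            Finset.mem_singleton]
          grind
  refine ⟨⟨hpts, ?_⟩, ⟨a, b, c, d, hab, hac, had, hbc, hbd, hcd, hleave, e, by simp, by simp⟩, hleave⟩
  intro B' hB'
  have c1 := pts_count _ hpts
  have c2 := pts_count _ hB'
  have hm := choose_mod n hn
  have c3 : ((Finset.univ.powersetCard 2).filter fun p : Finset (Fin n) =>
      p ∈ leave (insert {a, c, e} (insert {b, d, e} (B.erase F)))).card ≤ 4 := by
    refine le_trans (Finset.card_le_card (t := {{a, b}, {b, c}, {c, d}, {d, a}}) ?_) Finset.card_le_four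
    intro p hp
    have := (Finset.mem_filter.1 hp).2
    rw [hleave] at this
    simpa using this
  have c4 : ((Finset.univ.powersetCard 2).filter fun p : Finset (Fin n) => p ∈ leave B').card ≠ 1 := by
    intro h1
    obtain ⟨p, hp⟩ := Finset.card_eq_one.1 h1
    have hl : leave B' = {p} := by
      ext q
      have : q ∈ ((Finset.univ.powersetCard 2).filter fun p : Finset (Fin n) => p ∈ leave B') ↔ q ∈ ({p} : Finset _) := by
        rw [hp]
      rw [Finset.mem_filter, Finset.mem_powersetCard, Finset.mem_singleton] at this
      rw [Set.mem_singleton_iff, ← this]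
      exact ⟨fun h => ⟨⟨Finset.subset_univ _, h.1⟩, h⟩, fun h => h.2⟩
    have hp2 : p ∈ leave B' := by rw [hl]; rfl
    obtain ⟨x, y, hxy, rfl⟩ := Finset.card_eq_two.1 hp2.1
    exact leave_ne_single (by omega) B' hB' x y hxy hl
  omega
end
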